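/- arXiv:0707.2813 — 3 statements merged into one kernel-verified Lean document; each statement's English description precedes it below -/
import Mathlib

section
/- For every pair of integers 0 ≤ j, k ≤ n−1, the series ∑_{x∈ℤ} Φ_j(x) Ψ_k(x) converges absolutely, and ∑_{x∈ℤ} Φ_j(x) Ψ_k(x) = δ_{j,k} (equal to 1 if j = k and 0 otherwise). -/
open Complex MeasureTheory
open scoped Real

/-- `Ψ_k(x) = (1/(2πi)) ∮_{|w|=ρ} (w(w−1))^k w^{−(x+2n+1)} e^{aw + b/w} dw`. -/
noncomputable def Psi (n : ℕ) (a b ρ : ℝ) (k : ℕ) (x : ℤ) : ℂ :=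
  (2 * (Real.pi : ℂ) * Complex.I)⁻¹ *
    ∮ w in C(0, ρ), (w * (w - 1)) ^ k * w ^ (-(x + 2 * (n : ℤ) + 1)) *
      Complex.exp ((a : ℂ) * w + (b : ℂ) / w)

/-- `Φ_j(x) = (1/(2πi)) ∮_{|z−1|=r} (2z−1) z^{x+2n} (z(z−1))^{−(j+1)} e^{−az − b/z} dz`. -/
noncomputable def Phi (n : ℕ) (a b r : ℝ) (j : ℕ) (x : ℤ) : ℂ :=
  (2 * (Real.pi : ℂ) * Complex.I)⁻¹ *
    ∮ z in C(1, r), (2 * z - 1) * z ^ (x + 2 * (n : ℤ)) *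
      (z * (z - 1)) ^ (-((j : ℤ) + 1)) *
      Complex.exp (-((a : ℂ) * z) - (b : ℂ) / z)

/-!
As a function of `x`, `Ψ_k(x)` lists the Laurent coefficients at `0` of
`F(w) = (w(w-1))^k e^{aw+b/w}`, which is holomorphic on the punctured plane, and `Φ_j(x)` integrates
the monomials `z^{x+2n}` against a kernel `G` on a circle around `1` avoiding `0`. On that circle
the Laurent series of `F` converges uniformly, so summing over `x` replaces the monomials by `F`
itself. The exponentials in `G F` cancel, and the substitution `u = z(z-1)`, `du = (2z-1) dz` turns
what is left into `∮ u^{k-j-1} du`, a single turn around `u = 0`.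
-/

open Metric Set

theorem zpow_le_zpow_add_zpow {K : Type*} [Field K] [LinearOrder K] [IsStrictOrderedRing K]
    {s x t : K} (hs : 0 < s) (hsx : s ≤ x) (hxt : x ≤ t) (m : ℤ) :
    x ^ m ≤ s ^ m + t ^ m := by
  have hx : 0 < x := hs.trans_le hsx
  have ht : 0 < t := hx.trans_le hxt
  rcases le_total 0 m with hm | hm
  · exact le_add_of_nonneg_of_le (zpow_pos hs m).le (zpow_le_zpow_left₀ hm hx.le hxt)
  · refine le_add_of_le_of_nonneg ?_ (zpow_pos ht m).le
    simpa only [inv_zpow', neg_neg] using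
      zpow_le_zpow_left₀ (neg_nonneg.2 hm) (inv_nonneg.2 hx.le) (inv_anti₀ hs hsx)

theorem hasSum_zpow_neg_mul_pow {𝕜 : Type*} [NormedField 𝕜] {u v : 𝕜} (h : ‖u‖ < ‖v‖) :
    HasSum (fun n : ℕ => v ^ (-(n + 1) : ℤ) * u ^ n) (v - u)⁻¹ := by
  have hv : v ≠ 0 := norm_pos_iff.1 ((norm_nonneg u).trans_lt h)
  have hlt : ‖u / v‖ < 1 := by rwa [norm_div, div_lt_one (norm_pos_iff.2 hv)]
  have hsum := (hasSum_geometric_of_norm_lt_one hlt).mul_right v⁻¹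
  rw [← mul_inv, sub_mul, one_mul, div_mul_cancel₀ _ hv] at hsum
  refine hsum.congr_fun fun n => ?_
  rw [zpow_neg, ← Nat.cast_succ, zpow_natCast, pow_succ, mul_inv, div_pow]
  ring

section CircleIntegral

variable {E : Type*} [NormedAddCommGroup E] [NormedSpace ℂ E]

theorem hasSum_circleIntegral_of_summable_bound [CompleteSpace E] {ι : Type*} [Countable ι]
    {F : ι → ℂ → E} {u : ι → ℝ} {c : ℂ} {R : ℝ} (hR : 0 ≤ R)
    (hF : ∀ i, ContinuousOn (F i) (sphere c R)) (hu : Summable u)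
    (hFu : ∀ i, ∀ z ∈ sphere c R, ‖F i z‖ ≤ u i) :
    HasSum (fun i => ∮ z in C(c, R), F i z) (∮ z in C(c, R), ∑' i, F i z) := by
  refine ((tendstoUniformlyOn_tsum hu hFu).tendsto_circleIntegral_of_continuousOn hR
    (.of_forall fun s => continuousOn_finsetSum s fun i _ => hF i)).congr fun s => ?_
  exact circleIntegral.integral_fun_sum fun i _ => (hF i).circleIntegrable hR

theorem circleIntegral_sub_inv_of_notMem_closedBall {c w : ℂ} {R : ℝ} (hR : 0 ≤ R)
    (hw : w ∉ closedBall c R) : ∮ z in C(c, R), (z - w)⁻¹ = 0 := by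
  have hd : DifferentiableOn ℂ (fun z => (z - w)⁻¹) (closedBall c R) :=
    (differentiableOn_id.sub_const w).inv fun z hz =>
      sub_ne_zero.2 (ne_of_mem_of_not_mem hz hw)
  exact (hd.diffContOnCl_ball subset_rfl).circleIntegral_eq_zero hR

theorem circleIntegral_deriv_mul_zpow_of_ne {φ φ' : ℂ → ℂ} {c : ℂ} {R : ℝ} (hR : 0 ≤ R)
    (hφ : ∀ z ∈ sphere c R, HasDerivWithinAt φ (φ' z) (sphere c R) z)
    (hφ0 : ∀ z ∈ sphere c R, φ z ≠ 0) {p : ℤ} (hp : p ≠ -1) :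
    ∮ z in C(c, R), φ' z * φ z ^ p = 0 := by
  have hp' : (p : ℂ) + 1 ≠ 0 := by exact_mod_cast fun h => hp (eq_neg_of_add_eq_zero_left h)
  refine circleIntegral.integral_eq_zero_of_hasDerivWithinAt
    (f := fun z => φ z ^ (p + 1) / ((p : ℂ) + 1)) hR fun z hz => ?_
  have hpow := (hasDerivAt_zpow (p + 1) (φ z) (.inl (hφ0 z hz))).comp_hasDerivWithinAt z (hφ z hz)
  refine (hpow.div_const ((p : ℂ) + 1)).congr_deriv ?_
  rw [add_sub_cancel_right]
  push_cast
  field_simp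

variable [CompleteSpace E] {f : ℂ → E} {c w : ℂ} {r R : ℝ}

theorem circleIntegral_dslope (hR : 0 ≤ R) (hf : ContinuousOn f (sphere c R))
    (hw : w ∉ sphere c R) :
    ∮ z in C(c, R), dslope f w z =
      (∮ z in C(c, R), (z - w)⁻¹ • f z) - (∮ z in C(c, R), (z - w)⁻¹) • f w := by
  have hinv : ContinuousOn (fun z => (z - w)⁻¹) (sphere c R) :=
    (continuousOn_id.sub continuousOn_const).inv₀ fun z hz =>
      sub_ne_zero.2 (ne_of_mem_of_not_mem hz hw)
  have hint : CircleIntegrable (fun z => (z - w)⁻¹ • f z) c R := (hinv.smul hf).circleIntegrable hR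
  have hintw : CircleIntegrable (fun z => (z - w)⁻¹ • f w) c R :=
    (hinv.smul continuousOn_const).circleIntegrable hR
  rw [← circleIntegral.integral_smul_const, ← circleIntegral.integral_sub hint hintw]
  refine circleIntegral.integral_congr hR fun z hz => ?_
  simp only [dslope_of_ne f (ne_of_mem_of_not_mem hz hw), slope_def_module, smul_sub]

theorem sphere_subset_closedBall_sdiff_ball {ρ : ℝ} (hρ : ρ ∈ Icc r R) :
    sphere c ρ ⊆ closedBall c R \ ball c r := fun z hz => by
  rw [mem_sphere] at hz
  simpa [hz] using hρ.symm

theorem circleIntegral_sub_circleIntegral_of_annulus (hr : 0 < r)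
    (hc : ContinuousOn f (closedBall c R \ ball c r))
    (hd : DifferentiableOn ℂ f (ball c R \ closedBall c r)) (hw : w ∈ ball c R \ closedBall c r) :
    (∮ z in C(c, R), (z - w)⁻¹ • f z) - (∮ z in C(c, r), (z - w)⁻¹ • f z) =
      (2 * π * I : ℂ) • f w := by
  have hrw : r < dist w c := not_le.1 hw.2
  have hrR : r ≤ R := (hrw.trans hw.1).le
  have hnhds : ∀ z ∈ ball c R \ closedBall c r, ball c R \ closedBall c r ∈ nhds z :=
    fun z hz => (isOpen_ball.sdiff isClosed_closedBall).mem_nhds hz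
  have hfw : DifferentiableAt ℂ f w := hd.differentiableAt (hnhds w hw)
  have hcont : ContinuousOn (dslope f w) (closedBall c R \ ball c r) :=
    (continuousOn_dslope (Filter.mem_of_superset (hnhds w hw)
      (sdiff_subset_sdiff ball_subset_closedBall ball_subset_closedBall))).2 ⟨hc, hfw⟩
  have hslope : ∮ z in C(c, R), dslope f w z = ∮ z in C(c, r), dslope f w z :=
    circleIntegral_eq_of_differentiable_on_annulus_off_countable hr hrR (countable_singleton w)
      hcont fun z hz =>
        (differentiableAt_dslope_of_ne hz.2).2 (hd.differentiableAt (hnhds z hz.1))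
  rw [circleIntegral_dslope (hr.le.trans hrR)
      (hc.mono (sphere_subset_closedBall_sdiff_ball ⟨hrR, le_rfl⟩)) (ne_of_lt hw.1),
    circleIntegral_dslope hr.le
      (hc.mono (sphere_subset_closedBall_sdiff_ball ⟨le_rfl, hrR⟩)) (ne_of_gt hrw),
    circleIntegral.integral_sub_inv_of_mem_ball hw.1,
    circleIntegral_sub_inv_of_notMem_closedBall hr.le hw.2, zero_smul, sub_zero] at hslope
  rw [← hslope, sub_sub_cancel]

end CircleIntegral

section Laurent

variable {E : Type*} [NormedAddCommGroup E] [NormedSpace ℂ E]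

/-- The coefficient of `(z - c) ^ m` in the Laurent expansion of `f` around `c`, computed on the
circle of radius `R`. -/
noncomputable def laurentCoeff (f : ℂ → E) (c : ℂ) (R : ℝ) (m : ℤ) : E :=
  (2 * π * I : ℂ)⁻¹ • ∮ z in C(c, R), (z - c) ^ (-(m + 1)) • f z

variable {f : ℂ → E} {c w : ℂ} {r R : ℝ}

theorem hasSum_laurentCoeff_natCast (hf : CircleIntegrable f c R) (hw : w ∈ ball c R) :
    HasSum (fun n : ℕ => (w - c) ^ (n : ℤ) • laurentCoeff f c R n)
      ((2 * π * I : ℂ)⁻¹ • ∮ z in C(c, R), (z - w)⁻¹ • f z) := by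
  have hsum := hasSum_cauchyPowerSeries_integral hf (mem_ball_iff_norm.1 hw)
  rw [add_sub_cancel] at hsum
  refine hsum.congr_fun fun n => ?_
  rw [cauchyPowerSeries_apply, laurentCoeff, smul_comm, ← circleIntegral.integral_smul]
  congr! 3 with z
  rw [smul_smul, smul_smul, div_pow, zpow_neg, ← Nat.cast_succ, zpow_natCast, zpow_natCast,
    pow_succ, mul_inv, div_eq_mul_inv, mul_assoc]

theorem hasSum_laurentCoeff_neg_natCast_add_one [CompleteSpace E] (hR : 0 ≤ R)
    (hf : ContinuousOn f (sphere c R)) (hw : w ∉ closedBall c R) :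
    HasSum (fun n : ℕ => (w - c) ^ (-(n + 1) : ℤ) • laurentCoeff f c R (-(n + 1)))
      (-((2 * π * I : ℂ)⁻¹ • ∮ z in C(c, R), (z - w)⁻¹ • f z)) := by
  obtain ⟨B, hB⟩ := (isCompact_sphere c R).exists_bound_of_continuousOn hf
  have hRw : R < ‖w - c‖ := by simpa [dist_eq] using hw
  let F : ℕ → ℂ → E := fun n z => ((w - c) ^ (-(n + 1) : ℤ) * (z - c) ^ n) • f z
  have hbound : Summable fun n : ℕ => ‖w - c‖ ^ (-(n + 1) : ℤ) * R ^ n * B := by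
    have hlt : ‖(R : ℂ)‖ < ‖w - c‖ := by rwa [norm_real, Real.norm_of_nonneg hR]
    simpa [abs_of_nonneg hR] using (hasSum_zpow_neg_mul_pow hlt).summable.norm.mul_right B
  have hsum : HasSum (fun n => ∮ z in C(c, R), F n z) (∮ z in C(c, R), ∑' n, F n z) := by
    refine hasSum_circleIntegral_of_summable_bound hR (fun n => by fun_prop) hbound
      fun n z hz => ?_
    rw [norm_smul, norm_mul, norm_zpow, norm_pow, mem_sphere_iff_norm.1 hz]
    gcongr
    exact hB z hz
  have hF : EqOn (fun z => ∑' n, F n z) (fun z => (-1 : ℂ) • (z - w)⁻¹ • f z) (sphere c R) := by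
    intro z hz
    have hzw : ‖z - c‖ < ‖w - c‖ := by rwa [mem_sphere_iff_norm.1 hz]
    refine ((hasSum_zpow_neg_mul_pow hzw).smul_const (f z)).tsum_eq.trans ?_
    rw [sub_sub_sub_cancel_right, ← neg_sub, inv_neg, neg_smul]
    exact (neg_one_smul ℂ _).symm
  rw [circleIntegral.integral_congr hR hF, circleIntegral.integral_smul, neg_one_smul] at hsum
  rw [← smul_neg]
  refine (hsum.const_smul _).congr_fun fun n => ?_
  have hexp : -(-((n : ℤ) + 1) + 1) = n := by ring
  simp only [F, laurentCoeff, hexp, zpow_natCast, mul_smul, circleIntegral.integral_smul]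
  rw [smul_comm]

theorem laurentCoeff_eq_of_annulus (hr : 0 < r) (hrR : r ≤ R)
    (hc : ContinuousOn f (closedBall c R \ ball c r))
    (hd : DifferentiableOn ℂ f (ball c R \ closedBall c r)) :
    laurentCoeff f c R = laurentCoeff f c r := by
  ext m
  have hne : ∀ z ∉ ball c r, z - c ≠ 0 ∨ 0 ≤ -(m + 1) := fun z hz =>
    .inl (sub_ne_zero.2 fun h => hz (h ▸ mem_ball_self hr))
  refine congrArg ((2 * π * I : ℂ)⁻¹ • ·)
    (circleIntegral_eq_of_differentiable_on_annulus_off_countable hr hrR countable_empty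
      (((continuousOn_id.sub continuousOn_const).zpow₀ _ fun z hz => hne z hz.2).smul hc)
      fun z hz => ?_)
  have hzr : z ∉ ball c r := fun h => hz.1.2 (ball_subset_closedBall h)
  exact ((differentiableAt_id.sub_const c).zpow (hne z hzr)).smul
    (hd.differentiableAt ((isOpen_ball.sdiff isClosed_closedBall).mem_nhds hz.1))

theorem hasSum_laurentCoeff_of_annulus [CompleteSpace E] (hr : 0 < r)
    (hc : ContinuousOn f (closedBall c R \ ball c r))
    (hd : DifferentiableOn ℂ f (ball c R \ closedBall c r)) (hw : w ∈ ball c R \ closedBall c r) :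
    HasSum (fun m : ℤ => (w - c) ^ m • laurentCoeff f c R m) (f w) := by
  have hrR : r ≤ R := ((not_le.1 hw.2).trans hw.1).le
  have hcR := hc.mono (sphere_subset_closedBall_sdiff_ball ⟨hrR, le_rfl⟩)
  have hcr := hc.mono (sphere_subset_closedBall_sdiff_ball ⟨le_rfl, hrR⟩)
  have hpos := hasSum_laurentCoeff_natCast (hcR.circleIntegrable (hr.le.trans hrR)) hw.1
  have hneg := hasSum_laurentCoeff_neg_natCast_add_one hr.le hcr hw.2
  rw [← laurentCoeff_eq_of_annulus hr hrR hc hd] at hneg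
  have hsum := HasSum.of_nat_of_neg_add_one
    (f := fun m : ℤ => (w - c) ^ m • laurentCoeff f c R m) hpos hneg
  rwa [← sub_eq_add_neg, ← smul_sub, circleIntegral_sub_circleIntegral_of_annulus hr hc hd hw,
    inv_smul_smul₀ two_pi_I_ne_zero] at hsum

theorem hasSum_laurentCoeff_of_differentiableOn_compl_singleton [CompleteSpace E]
    (hf : DifferentiableOn ℂ f {c}ᶜ) (hR : 0 < R) (hw : w ≠ c) :
    HasSum (fun m : ℤ => (w - c) ^ m • laurentCoeff f c R m) (f w) := by
  have hwc : 0 < dist w c := dist_pos.2 hw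
  have hannulus {r : ℝ} (hr : 0 < r) (S : ℝ) :
      ContinuousOn f (closedBall c S \ ball c r) ∧
        DifferentiableOn ℂ f (ball c S \ closedBall c r) := by
    have hd : DifferentiableOn ℂ f (closedBall c S \ ball c r) :=
      hf.mono fun z hz hzc => hz.2 (mem_singleton_iff.1 hzc ▸ mem_ball_self hr)
    exact ⟨hd.continuousOn,
      hd.mono (sdiff_subset_sdiff ball_subset_closedBall ball_subset_closedBall)⟩
  have hRS : R ≤ R + dist w c := le_add_of_nonneg_right hwc.le
  obtain ⟨hcR, hdR⟩ := hannulus hR (R + dist w c)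
  obtain ⟨hcw, hdw⟩ := hannulus (half_pos hwc) (R + dist w c)
  rw [← laurentCoeff_eq_of_annulus hR hRS hcR hdR]
  exact hasSum_laurentCoeff_of_annulus (half_pos hwc) hcw hdw
    ⟨lt_add_of_pos_left _ hR, not_le.2 (half_lt_self hwc)⟩

theorem exists_summable_bound_zpow_smul {a : ℤ → E} {K : Set ℂ} (hK : IsCompact K) (hcK : c ∉ K)
    (ha : ∀ z ∈ K, Summable fun m => ‖(z - c) ^ m • a m‖) :
    ∃ u : ℤ → ℝ, Summable u ∧ ∀ m, ∀ z ∈ K, ‖(z - c) ^ m • a m‖ ≤ u m := by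
  rcases K.eq_empty_or_nonempty with rfl | hne
  · exact ⟨0, summable_zero, by simp⟩
  have hdist : ContinuousOn (fun z => ‖z - c‖) K := by fun_prop
  obtain ⟨z₁, hz₁, hmin⟩ := hK.exists_isMinOn hne hdist
  obtain ⟨z₂, hz₂, hmax⟩ := hK.exists_isMaxOn hne hdist
  have hpos : 0 < ‖z₁ - c‖ := norm_pos_iff.2 (sub_ne_zero.2 (ne_of_mem_of_not_mem hz₁ hcK))
  refine ⟨_, (ha z₁ hz₁).add (ha z₂ hz₂), fun m z hz => ?_⟩
  simp only [norm_smul, norm_zpow, ← add_mul]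
  gcongr
  exact zpow_le_zpow_add_zpow hpos (hmin hz) (hmax hz) m

theorem hasSum_laurentCoeff_mul_circleIntegral {f h : ℂ → ℂ} {c x : ℂ} {R S : ℝ}
    (hf : DifferentiableOn ℂ f {c}ᶜ) (hR : 0 < R) (hS : 0 ≤ S) (hc : c ∉ sphere x S)
    (hh : ContinuousOn h (sphere x S)) :
    HasSum (fun m : ℤ => (∮ z in C(x, S), h z * (z - c) ^ m) * laurentCoeff f c R m)
      (∮ z in C(x, S), h z * f z) := by
  have hne : ∀ z ∈ sphere x S, z ≠ c := fun z hz => ne_of_mem_of_not_mem hz hc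
  have hlaurent : ∀ z ∈ sphere x S,
      HasSum (fun m : ℤ => (z - c) ^ m • laurentCoeff f c R m) (f z) := fun z hz =>
    hasSum_laurentCoeff_of_differentiableOn_compl_singleton hf hR (hne z hz)
  obtain ⟨B, hB⟩ := (isCompact_sphere x S).exists_bound_of_continuousOn hh
  obtain ⟨u, hu, hbound⟩ := exists_summable_bound_zpow_smul (isCompact_sphere x S) hc
    fun z hz => (hlaurent z hz).summable.norm
  have hsum := hasSum_circleIntegral_of_summable_bound hS
    (F := fun m z => h z * ((z - c) ^ m • laurentCoeff f c R m))
    (fun m => hh.mul (((continuousOn_id.sub continuousOn_const).zpow₀ m fun z hz =>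
      .inl (sub_ne_zero.2 (hne z hz))).smul continuousOn_const))
    (hu.mul_left B) fun m z hz => by
      rw [norm_mul]
      exact mul_le_mul (hB z hz) (hbound m z hz) (norm_nonneg _) ((norm_nonneg _).trans (hB z hz))
  rw [circleIntegral.integral_congr hS fun z hz => ((hlaurent z hz).mul_left (h z)).tsum_eq] at hsum
  refine hsum.congr_fun fun m => ?_
  simpa only [smul_eq_mul, mul_assoc] using (circleIntegral.integral_smul_const
    (fun z => h z * (z - c) ^ m) (laurentCoeff f c R m) x S).symm

end Laurent

section Biorthogonality

/-- The function `(w(w-1))^k e^{aw+b/w}`, whose Laurent coefficients at `0` are the values of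
`Psi`. -/
noncomputable def psiSymbol (a b : ℂ) (k : ℕ) (w : ℂ) : ℂ :=
  (w * (w - 1)) ^ k * exp (a * w + b / w)

/-- The kernel `(2z-1) (z(z-1))^{-(j+1)} e^{-az-b/z}` against which `Phi` integrates monomials. -/
noncomputable def phiKernel (a b : ℂ) (j : ℕ) (z : ℂ) : ℂ :=
  (2 * z - 1) * (z * (z - 1)) ^ (-((j : ℤ) + 1)) * exp (-(a * z) - b / z)

theorem differentiableOn_psiSymbol (a b : ℂ) (k : ℕ) :
    DifferentiableOn ℂ (psiSymbol a b k) {0}ᶜ := by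
  unfold psiSymbol
  fun_prop (disch := simp +contextual)

theorem continuousOn_phiKernel (a b : ℂ) (j : ℕ) : ContinuousOn (phiKernel a b j) {0, 1}ᶜ := by
  unfold phiKernel
  have hne : ∀ z ∈ ({0, 1}ᶜ : Set ℂ), z ≠ 0 ∧ z * (z - 1) ≠ 0 := fun z hz =>
    have hz0 : z ≠ 0 := fun h => hz (.inl h)
    ⟨hz0, mul_ne_zero hz0 (sub_ne_zero.2 fun h => hz (.inr h))⟩
  fun_prop (disch := grind)

theorem phiKernel_mul_psiSymbol (a b : ℂ) (j k : ℕ) {z : ℂ} (hz0 : z ≠ 0) (hz1 : z ≠ 1) :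
    phiKernel a b j z * psiSymbol a b k z = (2 * z - 1) * (z * (z - 1)) ^ ((k : ℤ) - (j + 1)) := by
  have hz : z * (z - 1) ≠ 0 := mul_ne_zero hz0 (sub_ne_zero.2 hz1)
  have hexp : exp (-(a * z) - b / z) * exp (a * z + b / z) = 1 := by
    rw [← exp_add, ← neg_add', neg_add_cancel, exp_zero]
  rw [sub_eq_neg_add (k : ℤ), zpow_add₀ hz, zpow_natCast, phiKernel, psiSymbol,
    mul_mul_mul_comm, hexp, mul_one, mul_assoc]

theorem Psi_eq_laurentCoeff (n : ℕ) (a b ρ : ℝ) (k : ℕ) (x : ℤ) :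
    Psi n a b ρ k x = laurentCoeff (psiSymbol a b k) 0 ρ (x + 2 * n) := by
  simp only [Psi, laurentCoeff, psiSymbol, sub_zero, smul_eq_mul, mul_assoc, mul_left_comm]

theorem Phi_eq_circleIntegral (n : ℕ) (a b r : ℝ) (j : ℕ) (x : ℤ) :
    Phi n a b r j x =
      (2 * π * I : ℂ)⁻¹ * ∮ z in C(1, r), phiKernel a b j z * (z - 0) ^ (x + 2 * n) := by
  simp only [Phi, phiKernel, sub_zero]
  congr! 3 with z
  ring

theorem circleIntegral_deriv_mul_sub_one_mul_zpow {r : ℝ} (hr0 : 0 < r) (hr1 : r < 1) (p : ℤ) :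
    ∮ z in C(1, r), (2 * z - 1) * (z * (z - 1)) ^ p = if p = -1 then (2 * π * I : ℂ) else 0 := by
  have h0 : (0 : ℂ) ∉ closedBall (1 : ℂ) r := by simpa using hr1
  have hz0 : ∀ z ∈ sphere (1 : ℂ) r, z ≠ 0 := fun z hz =>
    ne_of_mem_of_not_mem (sphere_subset_closedBall hz) h0
  have hz1 : ∀ z ∈ sphere (1 : ℂ) r, z - 1 ≠ 0 := fun z hz =>
    sub_ne_zero.2 (ne_of_mem_sphere hz hr0.ne')
  split_ifs with hp
  · have hpartial : EqOn (fun z : ℂ => (2 * z - 1) * (z * (z - 1)) ^ p)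
        (fun z => (z - 0)⁻¹ + (z - 1)⁻¹) (sphere 1 r) := fun z hz => by
      have := hz0 z hz
      have := hz1 z hz
      simp only [hp, zpow_neg_one, sub_zero]
      field_simp
      ring
    have hc0 : ContinuousOn (fun z : ℂ => (z - 0)⁻¹) (sphere 1 r) := by
      fun_prop (disch := simpa using hz0)
    have hc1 : ContinuousOn (fun z : ℂ => (z - 1)⁻¹) (sphere 1 r) := by
      fun_prop (disch := assumption)
    rw [circleIntegral.integral_congr hr0.le hpartial, circleIntegral.integral_add
      (hc0.circleIntegrable hr0.le) (hc1.circleIntegrable hr0.le),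
      circleIntegral_sub_inv_of_notMem_closedBall hr0.le h0,
      circleIntegral.integral_sub_center_inv 1 hr0.ne', zero_add]
  · refine circleIntegral_deriv_mul_zpow_of_ne hr0.le (fun z _ => ?_)
      (fun z hz => mul_ne_zero (hz0 z hz) (hz1 z hz)) hp
    have hderiv := (hasDerivAt_id z).mul ((hasDerivAt_id z).sub_const 1)
    exact (hderiv.congr_deriv (by simp only [id]; ring)).hasDerivWithinAt

end Biorthogonality

theorem stmt10_general (n : ℕ) (a b : ℝ) {ρ r : ℝ} (hρ : 0 < ρ) (hr0 : 0 < r) (hr1 : r < 1)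
    (j k : ℕ) :
    HasSum (fun x : ℤ => Phi n a b r j x * Psi n a b ρ k x) (if j = k then 1 else 0) := by
  have h0 : (0 : ℂ) ∉ sphere (1 : ℂ) r := by simpa using hr1.ne'
  have h1 : (1 : ℂ) ∉ sphere (1 : ℂ) r := by simpa using hr0.ne
  have hkernel : ContinuousOn (phiKernel a b j) (sphere 1 r) :=
    (continuousOn_phiKernel a b j).mono fun z hz => by
      rintro (rfl | rfl)
      exacts [h0 hz, h1 hz]
  have hsum := hasSum_laurentCoeff_mul_circleIntegral (differentiableOn_psiSymbol a b k) hρ hr0.le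
    h0 hkernel
  rw [circleIntegral.integral_congr hr0.le fun z hz => phiKernel_mul_psiSymbol a b j k
    (ne_of_mem_of_not_mem hz h0) (ne_of_mem_of_not_mem hz h1),
    circleIntegral_deriv_mul_sub_one_mul_zpow hr0 hr1] at hsum
  have hjk : (k : ℤ) - (j + 1) = -1 ↔ j = k := by lia
  have hshift := ((Equiv.addRight (2 * (n : ℤ))).hasSum_iff.2 hsum).mul_left (2 * π * I : ℂ)⁻¹
  simp only [hjk, mul_ite, mul_zero, inv_mul_cancel₀ two_pi_I_ne_zero] at hshift
  refine hshift.congr_fun fun x => ?_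
  rw [Phi_eq_circleIntegral, Psi_eq_laurentCoeff, mul_assoc]
  rfl

/-- biorthogonality `∑_{x∈ℤ} Φ_j(x) Ψ_k(x) = δ_{j,k}` for
`0 ≤ j, k ≤ n−1`, with absolute convergence (flat initial condition). -/
theorem stmt10 (n : ℕ) (hn : 1 ≤ n) (a b : ℝ)
    (ρ : ℝ) (hρ : 1 < ρ) (r : ℝ) (hr0 : 0 < r) (hr1 : r < 1)
    (j k : ℕ) (hj : j ≤ n - 1) (hk : k ≤ n - 1) :
    Summable (fun x : ℤ => ‖Phi n a b r j x * Psi n a b ρ k x‖) ∧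
    ∑' x : ℤ, Phi n a b r j x * Psi n a b ρ k x
      = if j = k then 1 else 0 := by
  have h := stmt10_general n a b (zero_lt_one.trans hρ) hr0 hr1 j k
  exact ⟨h.summable.norm, h.tsum_eq⟩
end

section
/- Fix u₁ < u₂. There exist constants C > 0 and T₀ > 0 such that for every T ≥ T₀ and all s₁, s₂ ∈ ℝ, | 2^{x₂−x₁} e^{(t₂−t₁)(2L+R/2)} · (T^{1/3}/(2πi)) ∮_{|w|=r} w^{−(x₁−x₂+1)} (w/(1−w))^{n₂−n₁} e^{(Rw+L/w)(t₁−t₂)} dw | ≤ C e^{−|s₁−s₂|}, where n_i = n(u_i), t_i = t(u_i), x_i = x(u_i, s_i), and the integral is over a positively oriented circle of any radius r ∈ (0,1) centered at 0 (the value is independent of such r). -/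
open Complex MeasureTheory
open scoped Real

/-- `t(u) = (p₀+θ)T − (p₁+1)uT^{2/3} + ½p₂u²T^{1/3}`. -/
noncomputable def tscale (θ p₀ p₁ p₂ T u : ℝ) : ℝ :=
  (p₀ + θ) * T - (p₁ + 1) * u * T ^ ((2 : ℝ)/3) + (1/2) * p₂ * u^2 * T ^ ((1 : ℝ)/3)

/-- `n(u) = ⌊(p₀−θ)T + (1−p₁)uT^{2/3} + ½p₂u²T^{1/3}⌋`. -/
noncomputable def nscale (θ p₀ p₁ p₂ T u : ℝ) : ℤ :=
  ⌊(p₀ - θ) * T + (1 - p₁) * u * T ^ ((2 : ℝ)/3) + (1/2) * p₂ * u^2 * T ^ ((1 : ℝ)/3)⌋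

/-- `x(u,s) = ⌊−2n(u) + v̄·t(u) − sT^{1/3}⌋` with `v̄ = R/2 − 2L`. -/
noncomputable def xscale (R L θ p₀ p₁ p₂ T u s : ℝ) : ℤ :=
  ⌊(-2 : ℝ) * (nscale θ p₀ p₁ p₂ T u : ℝ)
    + (R/2 - 2*L) * tscale θ p₀ p₁ p₂ T u - s * T ^ ((1 : ℝ)/3)⌋

/-!
Write `w = eᵠ e^(iφ) / 2`. The conjugated integrand is `1/w` at `w = 1/2`, and the terms of its
logarithm linear in `q` cancel up to rounding, except for `q (s₁ - s₂) T^(1/3)`: this is the role of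
the centring `x = -2n + v̄t - sT^(1/3)`. Let `m = T^(1/3)` and take the contour of radius `eᵠ / 2`
with `q = ± 1/m`, the sign being chosen so that `q (s₁ - s₂) m = -|s₁ - s₂|`. At `φ = 0` the
remaining terms of the logarithm are `O(q² m²) = O(1)`, so the modulus of the integrand is at most
`e^(O(1) - |s₁ - s₂|)`. Along the circle the modulus decays at least like `e^(-c m² (1 - cos φ))`,
where `c > 0` is proportional to `κ₁ (u₂ - u₁)`. The remaining integral is therefore Gaussian of
size `O(1/m)`, which absorbs the prefactor `T^(1/3)`.
-/

/-! ### Analytic preliminaries -/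

theorem circleIntegral_eq_of_differentiableOn_punctured_ball {E : Type*} [NormedAddCommGroup E]
    [NormedSpace ℂ E] [CompleteSpace E] {c : ℂ} {B r r' : ℝ} {f : ℂ → E}
    (hf : DifferentiableOn ℂ f (Metric.ball c B \ {c})) (hr : 0 < r) (hrB : r < B)
    (hr' : 0 < r') (hrB' : r' < B) :
    (∮ z in C(c, r), f z) = ∮ z in C(c, r'), f z := by
  wlog hle : r' ≤ r generalizing r r'
  · exact (this hr' hrB' hr hrB (not_le.1 hle).le).symm
  have hd : ∀ z, r' ≤ dist z c → dist z c ≤ r → DifferentiableAt ℂ f z := fun z h₁ h₂ ↦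
    hf.differentiableAt <| (Metric.isOpen_ball.sdiff isClosed_singleton).mem_nhds
      ⟨h₂.trans_lt hrB, fun h ↦ (hr'.trans_le h₁).ne' (dist_eq_zero.2 h)⟩
  refine circleIntegral_eq_of_differentiable_on_annulus_off_countable hr' hle Set.countable_empty
    (fun z hz ↦ (hd z ?_ hz.1).continuousAt.continuousWithinAt) (fun z hz ↦ hd z ?_ ?_)
  · exact not_lt.1 hz.2
  · exact (not_le.1 hz.1.2).le
  · exact (Metric.mem_ball.1 hz.1.1).le

theorem integral_exp_neg_mul_one_sub_cos_le {A : ℝ} (hA : 0 < A) :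
    ∫ φ in (0 : ℝ)..2 * π, Real.exp (-(A * (1 - Real.cos φ))) ≤ π * √(2 * π / A) / 2 := by
  set B := A * (2 / π ^ 2) with hB
  have hBpos : 0 < B := by positivity
  have hper : Function.Periodic (fun φ ↦ Real.exp (-(A * (1 - Real.cos φ)))) (2 * π) :=
    fun φ ↦ by simp only [Real.cos_add_two_pi]
  have hgauss : ∀ φ ∈ Set.Icc (-π) π,
      Real.exp (-(A * (1 - Real.cos φ))) ≤ Real.exp (-B * φ ^ 2) := by
    intro φ hφ
    have hcos := Real.cos_le_one_sub_mul_cos_sq (abs_le.2 hφ)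
    have := mul_le_mul_of_nonneg_left hcos hA.le
    exact Real.exp_le_exp.2 (by rw [hB]; linarith)
  calc ∫ φ in (0 : ℝ)..2 * π, Real.exp (-(A * (1 - Real.cos φ)))
      = ∫ φ in (-π)..π, Real.exp (-(A * (1 - Real.cos φ))) := by
        simpa only [zero_add, show -π + 2 * π = π by ring] using
          hper.intervalIntegral_add_eq 0 (-π)
    _ ≤ ∫ φ in (-π)..π, Real.exp (-B * φ ^ 2) :=
        intervalIntegral.integral_mono_on (by linarith [Real.pi_pos])
          (Continuous.intervalIntegrable (by fun_prop) _ _)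
          (Continuous.intervalIntegrable (by fun_prop) _ _) hgauss
    _ ≤ ∫ φ : ℝ, Real.exp (-B * φ ^ 2) := by
        rw [intervalIntegral.integral_of_le (by linarith [Real.pi_pos])]
        exact setIntegral_le_integral (integrable_exp_neg_mul_sq hBpos)
          (.of_forall fun φ ↦ (Real.exp_pos _).le)
    _ = π * √(2 * π / A) / 2 := by
        have hsq : π / B = (π / 2) ^ 2 * (2 * π / A) := by rw [hB]; field_simp
        rw [integral_gaussian, hsq, Real.sqrt_mul (by positivity), Real.sqrt_sq (by positivity)]
        ring

theorem abs_log_one_add_sub_log_one_add_le {x y : ℝ} (hx : 0 ≤ x) (hy : 0 ≤ y) :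
    |Real.log (1 + x) - Real.log (1 + y)| ≤ |x - y| := by
  have hlog_le : ∀ u v : ℝ, 0 ≤ u → 0 ≤ v → Real.log (1 + u) - Real.log (1 + v) ≤ |u - v| := by
    intro u v hu hv
    calc Real.log (1 + u) - Real.log (1 + v)
        = Real.log ((1 + u) / (1 + v)) := (Real.log_div (by positivity) (by positivity)).symm
      _ ≤ (1 + u) / (1 + v) - 1 := Real.log_le_sub_one_of_pos (by positivity)
      _ = (u - v) / (1 + v) := by field_simp; ring
      _ ≤ |u - v| / (1 + v) := by gcongr; exact le_abs_self _
      _ ≤ |u - v| := div_le_self (abs_nonneg _) (by linarith)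
  exact abs_sub_le_iff.2 ⟨hlog_le x y hx hy, abs_sub_comm x y ▸ hlog_le y x hy hx⟩

theorem abs_add_log_two_sub_exp_le {q : ℝ} (hq : |q| ≤ 1 / 4) :
    |q + Real.log (2 - Real.exp q)| ≤ 8 * q ^ 2 := by
  have hE : |Real.exp q - 1| ≤ 2 * |q| := Real.abs_exp_sub_one_le (by linarith)
  have hpos : 0 < 2 - Real.exp q := by linarith [(abs_le.1 hE).2]
  have hlog : q + Real.log (2 - Real.exp q) = Real.log (1 - (Real.exp q - 1) ^ 2) := by
    rw [show 1 - (Real.exp q - 1) ^ 2 = Real.exp q * (2 - Real.exp q) by ring,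
      Real.log_mul (Real.exp_pos q).ne' hpos.ne', Real.log_exp]
  have hy : (Real.exp q - 1) ^ 2 ≤ 4 * q ^ 2 := by
    have := pow_le_pow_left₀ (abs_nonneg _) hE 2
    rw [mul_pow, sq_abs, sq_abs] at this
    linarith
  have hq2 : q ^ 2 ≤ 1 / 16 := by
    have := pow_le_pow_left₀ (abs_nonneg _) hq 2
    rw [sq_abs] at this
    linarith
  rw [hlog]
  set y := (Real.exp q - 1) ^ 2
  have hy0 : 0 ≤ y := sq_nonneg _
  have hinv : (1 - y)⁻¹ ≤ 1 + 2 * y := by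
    rw [inv_le_iff_one_le_mul₀ (by linarith)]; nlinarith
  have hlow := Real.one_sub_inv_le_log_of_pos (x := 1 - y) (by linarith)
  have hup := Real.log_le_sub_one_of_pos (x := 1 - y) (by linarith)
  rw [abs_le]
  constructor <;> linarith

theorem abs_floor_sub_floor_sub_le (x y : ℝ) : |((⌊x⌋ - ⌊y⌋ : ℤ) : ℝ) - (x - y)| ≤ 1 := by
  push_cast
  rw [abs_le]
  constructor <;>
    linarith [Int.floor_le x, Int.floor_le y, Int.lt_floor_add_one x, Int.lt_floor_add_one y]

theorem abs_le_add_mul_sq_of_abs_sub_le {x a b m : ℝ} (hm : 1 ≤ m)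
    (h : |x - a * m ^ 2| ≤ b * m) : |x| ≤ (|a| + b) * m ^ 2 := by
  have hb : 0 ≤ b := nonneg_of_mul_nonneg_left ((abs_nonneg _).trans h) (by linarith)
  calc |x| = |a * m ^ 2 + (x - a * m ^ 2)| := by rw [add_sub_cancel]
    _ ≤ |a| * m ^ 2 + |x - a * m ^ 2| := by
        refine (abs_add_le _ _).trans_eq ?_
        rw [abs_mul, abs_sq]
    _ ≤ |a| * m ^ 2 + b * m ^ 2 := by
        gcongr
        exact h.trans (mul_le_mul_of_nonneg_left (le_self_pow₀ hm two_ne_zero) hb)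
    _ = (|a| + b) * m ^ 2 := by ring

theorem norm_one_sub_circleMap_zero_sq (ρ φ : ℝ) :
    ‖1 - circleMap 0 ρ φ‖ ^ 2 = (1 - ρ) ^ 2 + 2 * ρ * (1 - Real.cos φ) := by
  rw [← Complex.normSq_eq_norm_sq, Complex.normSq_apply]
  simp only [sub_re, sub_im, one_re, one_im, circleMap_zero, re_ofReal_mul, im_ofReal_mul,
    exp_ofReal_mul_I_re, exp_ofReal_mul_I_im]
  linear_combination ρ ^ 2 * Real.sin_sq_add_cos_sq φ

theorem re_mul_circleMap_zero_add_div (R L φ : ℝ) {ρ : ℝ} (hρ : ρ ≠ 0) :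
    ((R : ℂ) * circleMap 0 ρ φ + (L : ℂ) / circleMap 0 ρ φ).re =
      (R * ρ + L / ρ) * Real.cos φ := by
  have hnormSq : normSq (circleMap 0 ρ φ) = ρ ^ 2 := by
    rw [normSq_eq_norm_sq, norm_circleMap_zero, sq_abs]
  rw [add_re, re_ofReal_mul, div_re, hnormSq]
  simp only [circleMap_zero, re_ofReal_mul, exp_ofReal_mul_I_re, ofReal_re, ofReal_im]
  field_simp
  ring

/-! ### The integrand on the circle of radius `eᵠ / 2` -/

/-- The coefficient `β(q)` in `|1 - w|² = (1 - |w|)² (1 + β(q) (1 - cos (arg w)))` for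
`|w| = eᵠ / 2`. -/
noncomputable def angularCoeff (q : ℝ) : ℝ :=
  4 * Real.exp q / (2 - Real.exp q) ^ 2

/-- The logarithm of the conjugated integrand `2^(-X) e^(-τ(2L + R/2)) w^(-X) (w/(1-w))^N
e^((Rw + L/w)τ)` at the positive point `w = eᵠ / 2`. The conjugation makes it vanish at `q = 0`. -/
noncomputable def radialExponent (R L X N τ q : ℝ) : ℝ :=
  -(q * X) + N * (q - Real.log (2 - Real.exp q)) +
    τ * (R / 2 * (Real.exp q - 1) + 2 * L * (Real.exp (-q) - 1))

/-- The amount by which the logarithm of the modulus of the integrand decreases from `w = eᵠ / 2`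
to the point of the same circle whose argument has cosine `1 - c`. -/
noncomputable def angularDecay (R L N τ q c : ℝ) : ℝ :=
  N / 2 * Real.log (1 + angularCoeff q * c) +
    τ * (R / 2 * Real.exp q + 2 * L * Real.exp (-q)) * c

theorem angularCoeff_zero : angularCoeff 0 = 4 := by
  norm_num [angularCoeff]

theorem angularCoeff_nonneg (q : ℝ) : 0 ≤ angularCoeff q := by
  unfold angularCoeff
  positivity

theorem abs_angularCoeff_sub_four_le {q : ℝ} (hq : |q| ≤ 1 / 4) :
    |angularCoeff q - 4| ≤ 112 * |q| := by
  have hE : |Real.exp q - 1| ≤ 2 * |q| := Real.abs_exp_sub_one_le (by linarith)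
  unfold angularCoeff
  set y := Real.exp q - 1
  have hy2 : |y| ≤ 1 / 2 := by linarith
  obtain ⟨hy_lo, hy_hi⟩ := abs_le.1 hy2
  have hden : 1 / 4 ≤ (1 - y) ^ 2 := by nlinarith
  have hfrac : 4 * Real.exp q / (2 - Real.exp q) ^ 2 - 4 = y * (4 * (3 - y)) / (1 - y) ^ 2 := by
    rw [show Real.exp q = 1 + y by ring, show 2 - (1 + y) = 1 - y by ring]
    field_simp [show 1 - y ≠ 0 by linarith]
    ring
  rw [hfrac, abs_div, abs_sq, abs_mul, abs_of_pos (by linarith : 0 < 4 * (3 - y)),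
    div_le_iff₀ (by positivity)]
  nlinarith [abs_nonneg y, abs_nonneg q]

theorem angularDecay_zero (R L N τ c : ℝ) :
    angularDecay R L N τ 0 c = N / 2 * Real.log (1 + 4 * c) + τ * (R / 2 + 2 * L) * c := by
  simp only [angularDecay, angularCoeff_zero, neg_zero, Real.exp_zero, mul_one]

section Exponents

variable {R L : ℝ} (hR : 0 ≤ R) (hL : 0 ≤ L)
include hR hL

theorem abs_radialExponent_sub_le (X N τ : ℝ) {q : ℝ} (hq : |q| ≤ 1 / 4) :
    |radialExponent R L X N τ q - q * (2 * N + (R / 2 - 2 * L) * τ - X)| ≤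
      (8 * |N| + (R / 2 + 2 * L) * |τ|) * q ^ 2 := by
  have hE : |Real.exp q - 1 - q| ≤ q ^ 2 := Real.abs_exp_sub_one_sub_id_le (by linarith)
  have hE' : |Real.exp (-q) - 1 - -q| ≤ q ^ 2 := by
    simpa only [neg_sq] using
      Real.abs_exp_sub_one_sub_id_le (x := -q) (by rw [abs_neg]; linarith)
  have hdrift : |R / 2 * (Real.exp q - 1 - q) + 2 * L * (Real.exp (-q) - 1 - -q)| ≤
      (R / 2 + 2 * L) * q ^ 2 := by
    refine (abs_add_le _ _).trans ?_
    rw [abs_mul, abs_mul, abs_of_nonneg (by positivity : 0 ≤ R / 2),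
      abs_of_nonneg (by positivity : 0 ≤ 2 * L), add_mul]
    gcongr
  calc |radialExponent R L X N τ q - q * (2 * N + (R / 2 - 2 * L) * τ - X)|
      = |-(N * (q + Real.log (2 - Real.exp q))) +
          τ * (R / 2 * (Real.exp q - 1 - q) + 2 * L * (Real.exp (-q) - 1 - -q))| := by
        rw [radialExponent]; congr 1; ring
    _ ≤ |N| * |q + Real.log (2 - Real.exp q)| +
          |τ| * |R / 2 * (Real.exp q - 1 - q) + 2 * L * (Real.exp (-q) - 1 - -q)| := by
        refine (abs_add_le _ _).trans_eq ?_
        rw [abs_neg, abs_mul, abs_mul]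
    _ ≤ |N| * (8 * q ^ 2) + |τ| * ((R / 2 + 2 * L) * q ^ 2) := by
        gcongr
        exact abs_add_log_two_sub_exp_le hq
    _ = (8 * |N| + (R / 2 + 2 * L) * |τ|) * q ^ 2 := by ring

theorem abs_angularDecay_sub_zero_le (N τ : ℝ) {q c : ℝ} (hq : |q| ≤ 1 / 4) (hc : 0 ≤ c) :
    |angularDecay R L N τ q c - angularDecay R L N τ 0 c| ≤
      (56 * |N| + (R + 4 * L) * |τ|) * |q| * c := by
  have hE : |Real.exp q - 1| ≤ 2 * |q| := Real.abs_exp_sub_one_le (by linarith)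
  have hE' : |Real.exp (-q) - 1| ≤ 2 * |q| := by
    simpa only [abs_neg] using Real.abs_exp_sub_one_le (x := -q) (by rw [abs_neg]; linarith)
  have hlog : |Real.log (1 + angularCoeff q * c) - Real.log (1 + 4 * c)| ≤ 112 * |q| * c := by
    refine (abs_log_one_add_sub_log_one_add_le (mul_nonneg (angularCoeff_nonneg q) hc)
      (by positivity)).trans ?_
    rw [← sub_mul, abs_mul, abs_of_nonneg hc]
    gcongr
    exact abs_angularCoeff_sub_four_le hq
  have hdrift : |R / 2 * (Real.exp q - 1) + 2 * L * (Real.exp (-q) - 1)| ≤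
      (R + 4 * L) * |q| := by
    refine (abs_add_le _ _).trans ?_
    rw [abs_mul, abs_mul, abs_of_nonneg (by positivity : 0 ≤ R / 2),
      abs_of_nonneg (by positivity : 0 ≤ 2 * L)]
    calc R / 2 * |Real.exp q - 1| + 2 * L * |Real.exp (-q) - 1|
        ≤ R / 2 * (2 * |q|) + 2 * L * (2 * |q|) := by gcongr
      _ = (R + 4 * L) * |q| := by ring
  calc |angularDecay R L N τ q c - angularDecay R L N τ 0 c|
      = |N / 2 * (Real.log (1 + angularCoeff q * c) - Real.log (1 + 4 * c)) +
          τ * (R / 2 * (Real.exp q - 1) + 2 * L * (Real.exp (-q) - 1)) * c| := by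
        rw [angularDecay_zero, angularDecay]; congr 1; ring
    _ ≤ |N| / 2 * |Real.log (1 + angularCoeff q * c) - Real.log (1 + 4 * c)| +
          |τ| * |R / 2 * (Real.exp q - 1) + 2 * L * (Real.exp (-q) - 1)| * c := by
        refine (abs_add_le _ _).trans_eq ?_
        rw [abs_mul, abs_mul, abs_mul, abs_div, abs_two, abs_of_nonneg hc]
    _ ≤ |N| / 2 * (112 * |q| * c) + |τ| * ((R + 4 * L) * |q|) * c := by gcongr
    _ = (56 * |N| + (R + 4 * L) * |τ|) * |q| * c := by ring

theorem abs_angularDecay_zero_sub_le (N N' τ τ' : ℝ) {c : ℝ} (hc : 0 ≤ c) :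
    |angularDecay R L N τ 0 c - angularDecay R L N' τ' 0 c| ≤
      (2 * |N - N'| + (R / 2 + 2 * L) * |τ - τ'|) * c := by
  have hlog_nonneg : 0 ≤ Real.log (1 + 4 * c) := Real.log_nonneg (by linarith)
  have hlog_le : Real.log (1 + 4 * c) ≤ 4 * c := by
    linarith [Real.log_le_sub_one_of_pos (by positivity : 0 < 1 + 4 * c)]
  calc |angularDecay R L N τ 0 c - angularDecay R L N' τ' 0 c|
      = |(N - N') / 2 * Real.log (1 + 4 * c) + (τ - τ') * (R / 2 + 2 * L) * c| := by
        rw [angularDecay_zero, angularDecay_zero]; congr 1; ring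
    _ ≤ |N - N'| / 2 * Real.log (1 + 4 * c) + |τ - τ'| * (R / 2 + 2 * L) * c := by
        refine (abs_add_le _ _).trans_eq ?_
        rw [abs_mul, abs_mul, abs_mul, abs_div, abs_two, abs_of_nonneg hc,
          abs_of_nonneg hlog_nonneg, abs_of_nonneg (by positivity : 0 ≤ R / 2 + 2 * L)]
    _ ≤ |N - N'| / 2 * (4 * c) + |τ - τ'| * (R / 2 + 2 * L) * c := by gcongr
    _ = (2 * |N - N'| + (R / 2 + 2 * L) * |τ - τ'|) * c := by ring

theorem curvature_mul_le_angularDecay_zero {a a' c : ℝ} (ha' : 0 ≤ a')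
    (hκ : 0 ≤ (R + 4 * L) * a' + 4 * a) (hc : 0 ≤ c) (hc2 : c ≤ 2) :
    ((R + 4 * L) * a' + 4 * a) / 10 * c ≤ angularDecay R L a a' 0 c := by
  have hlog_le : Real.log (1 + 4 * c) ≤ 4 * c := by
    linarith [Real.log_le_sub_one_of_pos (by positivity : 0 < 1 + 4 * c)]
  have hlog_ge : 4 / 5 * c ≤ Real.log (1 + 4 * c) := by
    refine le_trans ?_ (Real.le_log_one_add_of_nonneg (by positivity : 0 ≤ 4 * c))
    rw [le_div_iff₀ (by positivity)]
    nlinarith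
  have hdrift : 0 ≤ (R + 4 * L) * a' * c := by positivity
  rw [angularDecay_zero]
  rcases le_total 0 a with ha | ha
  · have := mul_le_mul_of_nonneg_left hlog_ge (by linarith : 0 ≤ a / 2)
    linarith
  · have := mul_le_mul_of_nonpos_left hlog_le (by linarith : a / 2 ≤ 0)
    have := mul_nonneg hκ hc
    linarith

end Exponents

/-- The integrand of the diffusion term, with `X = x₁ - x₂`, `N = n₂ - n₁` and `τ = t₁ - t₂`. -/
noncomputable def diffusionIntegrand (R L : ℝ) (X N : ℤ) (τ : ℝ) (w : ℂ) : ℂ :=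
  w ^ (-(X + 1)) * (w / (1 - w)) ^ N * cexp (((R : ℂ) * w + (L : ℂ) / w) * (τ : ℂ))

/-- The conjugated diffusion term, rescaled by `m = T^(1/3)` and with contour of radius `r`; as
before `X = x₁ - x₂`, `N = n₂ - n₁` and `τ = t₁ - t₂`. -/
noncomputable def rescaledDiffusion (R L m : ℝ) (X N : ℤ) (τ r : ℝ) : ℂ :=
  (2 : ℂ) ^ (-X) * cexp ((-τ * (2 * L + R / 2) : ℝ) : ℂ) * (m : ℂ) * (2 * (π : ℂ) * I)⁻¹ *
    ∮ w in C(0, r), diffusionIntegrand R L X N τ w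

theorem differentiableOn_diffusionIntegrand (R L : ℝ) (X N : ℤ) (τ : ℝ) :
    DifferentiableOn ℂ (diffusionIntegrand R L X N τ) (Metric.ball 0 1 \ {0}) := by
  rintro w ⟨hw, hw0 : w ≠ 0⟩
  have hw1 : 1 - w ≠ 0 := by
    rintro h
    simp [← sub_eq_zero.1 h] at hw
  have hpow : DifferentiableAt ℂ (fun w : ℂ ↦ w ^ (-(X + 1))) w :=
    differentiableAt_zpow.2 (Or.inl hw0)
  have hquot : DifferentiableAt ℂ (fun w : ℂ ↦ (w / (1 - w)) ^ N) w :=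
    DifferentiableAt.zpow (by fun_prop (disch := assumption)) (Or.inl (div_ne_zero hw0 hw1))
  have hexp : DifferentiableAt ℂ (fun w : ℂ ↦ cexp (((R : ℂ) * w + L / w) * τ)) w := by
    fun_prop (disch := assumption)
  exact ((hpow.mul hquot).mul hexp).differentiableWithinAt

theorem rescaledDiffusion_radius_congr (R L m : ℝ) (X N : ℤ) (τ : ℝ) {r r' : ℝ}
    (hr : 0 < r) (hr1 : r < 1) (hr' : 0 < r') (hr1' : r' < 1) :
    rescaledDiffusion R L m X N τ r = rescaledDiffusion R L m X N τ r' := by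
  rw [rescaledDiffusion, rescaledDiffusion, circleIntegral_eq_of_differentiableOn_punctured_ball
    (differentiableOn_diffusionIntegrand R L X N τ) hr hr1 hr' hr1']

theorem norm_circleMap_zero_div_one_sub {q : ℝ} (hq : Real.exp q < 2) (φ : ℝ) :
    ‖circleMap 0 (Real.exp q / 2) φ / (1 - circleMap 0 (Real.exp q / 2) φ)‖ =
      Real.exp (q - Real.log (2 - Real.exp q) -
        Real.log (1 + angularCoeff q * (1 - Real.cos φ)) / 2) := by
  have hpos : 0 < 2 - Real.exp q := sub_pos.2 hq
  set β := angularCoeff q with hβ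
  have hβc : 0 < 1 + β * (1 - Real.cos φ) := by
    have := mul_nonneg (angularCoeff_nonneg q) (sub_nonneg.2 (Real.cos_le_one φ))
    positivity
  have hnorm_sq : ‖1 - circleMap 0 (Real.exp q / 2) φ‖ ^ 2 =
      ((2 - Real.exp q) / 2) ^ 2 * (1 + β * (1 - Real.cos φ)) := by
    rw [norm_one_sub_circleMap_zero_sq, hβ, angularCoeff]
    field_simp
    ring
  have hnorm : ‖1 - circleMap 0 (Real.exp q / 2) φ‖ =
      (2 - Real.exp q) / 2 * √(1 + β * (1 - Real.cos φ)) := by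
    rw [← Real.sqrt_sq (norm_nonneg _), hnorm_sq, Real.sqrt_mul (by positivity),
      Real.sqrt_sq (by positivity)]
  rw [norm_div, hnorm, norm_circleMap_zero, abs_of_pos (by positivity), Real.exp_sub,
    Real.exp_sub, Real.exp_log hpos, Real.exp_half, Real.exp_log hβc]
  field_simp

theorem norm_circleMap_zero_mul_diffusionIntegrand (R L : ℝ) (X N : ℤ) (τ : ℝ) {q : ℝ}
    (hq : Real.exp q < 2) (φ : ℝ) :
    (2 : ℝ) ^ (-X) * Real.exp (-τ * (2 * L + R / 2)) *
        ‖circleMap 0 (Real.exp q / 2) φ *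
          diffusionIntegrand R L X N τ (circleMap 0 (Real.exp q / 2) φ)‖ =
      Real.exp (radialExponent R L X N τ q - angularDecay R L N τ q (1 - Real.cos φ)) := by
  set ρ := Real.exp q / 2 with hρ
  have hρ0 : 0 < ρ := by positivity
  have hpow : (2 : ℝ) ^ (-X) * (ρ * ρ ^ (-(X + 1))) = Real.exp (-(q * X)) := by
    rw [← zpow_one_add₀ hρ0.ne', show 1 + -(X + 1) = -X by ring, ← mul_zpow, hρ,
      mul_div_cancel₀ _ two_ne_zero, ← Real.rpow_intCast, ← Real.exp_mul]
    push_cast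
    ring_nf
  have hexp : ‖cexp (((R : ℂ) * circleMap 0 ρ φ + L / circleMap 0 ρ φ) * τ)‖ =
      Real.exp ((R / 2 * Real.exp q + 2 * L * Real.exp (-q)) * Real.cos φ * τ) := by
    rw [norm_exp, re_mul_ofReal, re_mul_circleMap_zero_add_div R L φ hρ0.ne', hρ, Real.exp_neg]
    congr 3
    field_simp
  calc (2 : ℝ) ^ (-X) * Real.exp (-τ * (2 * L + R / 2)) *
        ‖circleMap 0 ρ φ * diffusionIntegrand R L X N τ (circleMap 0 ρ φ)‖
      = (2 : ℝ) ^ (-X) * (ρ * ρ ^ (-(X + 1))) * Real.exp (-τ * (2 * L + R / 2)) *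
          ‖circleMap 0 ρ φ / (1 - circleMap 0 ρ φ)‖ ^ N *
          ‖cexp (((R : ℂ) * circleMap 0 ρ φ + L / circleMap 0 ρ φ) * τ)‖ := by
        rw [diffusionIntegrand, norm_mul, norm_mul, norm_mul, norm_zpow, norm_zpow,
          norm_circleMap_zero, abs_of_pos hρ0]
        ring
    _ = Real.exp (radialExponent R L X N τ q - angularDecay R L N τ q (1 - Real.cos φ)) := by
        rw [hpow, hexp, norm_circleMap_zero_div_one_sub hq, ← Real.rpow_intCast, ← Real.exp_mul,
          ← Real.exp_add, ← Real.exp_add, ← Real.exp_add, radialExponent, angularDecay]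
        congr 1
        ring

theorem norm_circleIntegral_diffusionIntegrand_le {R L τ q A B : ℝ} {X N : ℤ}
    (hq : Real.exp q < 2) (hA : 0 < A)
    (hdecay : ∀ c, 0 ≤ c → c ≤ 2 →
      radialExponent R L X N τ q - angularDecay R L N τ q c ≤ B - A * c) :
    (2 : ℝ) ^ (-X) * Real.exp (-τ * (2 * L + R / 2)) *
        ‖∮ w in C(0, Real.exp q / 2), diffusionIntegrand R L X N τ w‖ ≤
      Real.exp B * (π * √(2 * π / A) / 2) := by
  set P := (2 : ℝ) ^ (-X) * Real.exp (-τ * (2 * L + R / 2))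
  set γ := circleMap 0 (Real.exp q / 2) with hγ
  have hP : 0 < P := by positivity
  have hpointwise : ∀ φ, ‖deriv γ φ • diffusionIntegrand R L X N τ (γ φ)‖ ≤
      P⁻¹ * (Real.exp B * Real.exp (-(A * (1 - Real.cos φ)))) := by
    intro φ
    rw [hγ, deriv_circleMap, smul_eq_mul, mul_right_comm, norm_mul, norm_I, mul_one,
      le_inv_mul_iff₀ hP, norm_circleMap_zero_mul_diffusionIntegrand R L X N τ hq,
      ← Real.exp_add, ← sub_eq_add_neg]
    exact Real.exp_le_exp.2 <| hdecay _ (by linarith [Real.cos_le_one φ])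
      (by linarith [Real.neg_one_le_cos φ])
  rw [← le_inv_mul_iff₀ hP]
  calc ‖∮ w in C(0, Real.exp q / 2), diffusionIntegrand R L X N τ w‖
      ≤ ∫ φ in (0 : ℝ)..2 * π, P⁻¹ * (Real.exp B * Real.exp (-(A * (1 - Real.cos φ)))) :=
        intervalIntegral.norm_integral_le_of_norm_le Real.two_pi_pos.le
          (.of_forall fun φ _ ↦ hpointwise φ) (Continuous.intervalIntegrable (by fun_prop) _ _)
    _ = P⁻¹ * (Real.exp B * ∫ φ in (0 : ℝ)..2 * π, Real.exp (-(A * (1 - Real.cos φ)))) := by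
        rw [intervalIntegral.integral_const_mul, intervalIntegral.integral_const_mul]
    _ ≤ P⁻¹ * (Real.exp B * (π * √(2 * π / A) / 2)) := by
        gcongr
        exact integral_exp_neg_mul_one_sub_cos_le hA

theorem norm_rescaledDiffusion_le {R L m τ q r A B : ℝ} {X N : ℤ} (hm : 0 ≤ m)
    (hq : Real.exp q < 2) (hA : 0 < A) (hr : 0 < r) (hr1 : r < 1)
    (hdecay : ∀ c, 0 ≤ c → c ≤ 2 →
      radialExponent R L X N τ q - angularDecay R L N τ q c ≤ B - A * c) :
    ‖rescaledDiffusion R L m X N τ r‖ ≤ m * Real.exp B * √(2 * π / A) / 4 := by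
  calc ‖rescaledDiffusion R L m X N τ r‖
      = ‖rescaledDiffusion R L m X N τ (Real.exp q / 2)‖ := by
        rw [rescaledDiffusion_radius_congr R L m X N τ hr hr1
          (by positivity : 0 < Real.exp q / 2) (by linarith)]
    _ = m * (2 * π)⁻¹ * ((2 : ℝ) ^ (-X) * Real.exp (-τ * (2 * L + R / 2)) *
          ‖∮ w in C(0, Real.exp q / 2), diffusionIntegrand R L X N τ w‖) := by
        simp only [rescaledDiffusion, norm_mul, norm_zpow, norm_exp, ofReal_re, norm_inv, norm_I,
          norm_real, norm_ofNat, Real.norm_of_nonneg hm, Real.norm_of_nonneg Real.pi_pos.le,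
          mul_one]
        ring
    _ ≤ m * (2 * π)⁻¹ * (Real.exp B * (π * √(2 * π / A) / 2)) :=
        mul_le_mul_of_nonneg_left (norm_circleIntegral_diffusionIntegrand_le hq hA hdecay)
          (by positivity)
    _ = m * Real.exp B * √(2 * π / A) / 4 := by field_simp; norm_num

/-! ### The bound at scale `T^(1/3)` -/

/-- The asymptotics, at scale `m = T^(1/3)`, of the increments `X = x₁ - x₂`, `N = n₂ - n₁` and
`τ = t₁ - t₂` between two points of the flat KPZ scaling with `S = s₁ - s₂`. -/
structure IsDiffusiveScaling (R L a a' b m S X N τ : ℝ) : Prop where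
  abs_N_sub_le : |N - a * m ^ 2| ≤ b * m
  abs_τ_sub_le : |τ - a' * m ^ 2| ≤ b * m
  abs_X_sub_le : |X - (2 * N + (R / 2 - 2 * L) * τ - S * m)| ≤ 1

theorem exists_abs_le_inv_and_mul_eq_neg_abs {m : ℝ} (hm : 0 < m) (S : ℝ) :
    ∃ q : ℝ, |q| ≤ 1 / m ∧ q * (S * m) = -|S| := by
  rcases le_total 0 S with hS | hS
  · refine ⟨-(1 / m), by rw [abs_neg, abs_of_pos (by positivity)], ?_⟩
    rw [abs_of_nonneg hS]
    field_simp
  · refine ⟨1 / m, by rw [abs_of_pos (by positivity)], ?_⟩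
    rw [abs_of_nonpos hS]
    field_simp

namespace IsDiffusiveScaling

variable {R L a a' b m S X N τ q : ℝ}

theorem b_nonneg (h : IsDiffusiveScaling R L a a' b m S X N τ) (hm : 0 < m) : 0 ≤ b :=
  nonneg_of_mul_nonneg_left ((abs_nonneg _).trans h.abs_N_sub_le) hm

theorem radialExponent_le (h : IsDiffusiveScaling R L a a' b m S X N τ) (hR : 0 ≤ R) (hL : 0 ≤ L)
    (hm : 4 ≤ m) (hq : |q| ≤ 1 / m) (hqS : q * (S * m) = -|S|) :
    radialExponent R L X N τ q ≤
      1 + 8 * (|a| + b) + (R / 2 + 2 * L) * (|a'| + b) - |S| := by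
  have hb : 0 ≤ b := h.b_nonneg (by linarith)
  have hq4 : |q| ≤ 1 / 4 := hq.trans (one_div_le_one_div_of_le (by norm_num) hm)
  have hqm : m ^ 2 * q ^ 2 ≤ 1 := by
    have hqm' : |q| * m ≤ 1 := (le_div_iff₀ (by linarith)).1 hq
    rw [← mul_pow, mul_comm, ← sq_abs, abs_mul, abs_of_nonneg (by linarith : 0 ≤ m)]
    exact pow_le_one₀ (by positivity) hqm'
  have hN := abs_le_add_mul_sq_of_abs_sub_le (by linarith) h.abs_N_sub_le
  have hτ := abs_le_add_mul_sq_of_abs_sub_le (by linarith) h.abs_τ_sub_le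
  have hlinear : q * (2 * N + (R / 2 - 2 * L) * τ - X) ≤ 1 - |S| := by
    have hround : -(q * (X - (2 * N + (R / 2 - 2 * L) * τ - S * m))) ≤ 1 := by
      refine (neg_le_abs _).trans ?_
      rw [abs_mul]
      exact mul_le_one₀ (by linarith) (abs_nonneg _) h.abs_X_sub_le
    linarith
  have hquadratic : (8 * |N| + (R / 2 + 2 * L) * |τ|) * q ^ 2 ≤
      8 * (|a| + b) + (R / 2 + 2 * L) * (|a'| + b) := by
    calc (8 * |N| + (R / 2 + 2 * L) * |τ|) * q ^ 2
        ≤ (8 * ((|a| + b) * m ^ 2) + (R / 2 + 2 * L) * ((|a'| + b) * m ^ 2)) * q ^ 2 := by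
          gcongr
      _ = (8 * (|a| + b) + (R / 2 + 2 * L) * (|a'| + b)) * (m ^ 2 * q ^ 2) := by ring
      _ ≤ 8 * (|a| + b) + (R / 2 + 2 * L) * (|a'| + b) :=
          mul_le_of_le_one_right (by positivity) hqm
  linarith [(abs_le.1 (abs_radialExponent_sub_le hR hL X N τ hq4)).2]

theorem le_angularDecay (h : IsDiffusiveScaling R L a a' b m S X N τ) (hR : 0 ≤ R) (hL : 0 ≤ L)
    (ha' : 0 ≤ a') (hκ : 0 ≤ (R + 4 * L) * a' + 4 * a) (hm : 4 ≤ m) (hq : |q| ≤ 1 / m)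
    {c : ℝ} (hc : 0 ≤ c) (hc2 : c ≤ 2) :
    (((R + 4 * L) * a' + 4 * a) / 10 * m ^ 2 -
      (56 * (|a| + b) + (R + 4 * L) * (|a'| + b) + b * (2 + R / 2 + 2 * L)) * m) * c ≤
      angularDecay R L N τ q c := by
  have hm0 : 0 < m := by linarith
  have hb : 0 ≤ b := h.b_nonneg hm0
  have hq4 : |q| ≤ 1 / 4 := hq.trans (one_div_le_one_div_of_le (by norm_num) hm)
  have hN := abs_le_add_mul_sq_of_abs_sub_le (by linarith) h.abs_N_sub_le
  have hτ := abs_le_add_mul_sq_of_abs_sub_le (by linarith) h.abs_τ_sub_le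
  have hradius : (56 * |N| + (R + 4 * L) * |τ|) * |q| * c ≤
      (56 * (|a| + b) + (R + 4 * L) * (|a'| + b)) * m * c := by
    calc (56 * |N| + (R + 4 * L) * |τ|) * |q| * c
        ≤ (56 * ((|a| + b) * m ^ 2) + (R + 4 * L) * ((|a'| + b) * m ^ 2)) * (1 / m) * c := by
          gcongr
      _ = (56 * (|a| + b) + (R + 4 * L) * (|a'| + b)) * m * c := by field_simp
  have hscale : (2 * |N - a * m ^ 2| + (R / 2 + 2 * L) * |τ - a' * m ^ 2|) * c ≤
      b * (2 + R / 2 + 2 * L) * m * c := by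
    calc (2 * |N - a * m ^ 2| + (R / 2 + 2 * L) * |τ - a' * m ^ 2|) * c
        ≤ (2 * (b * m) + (R / 2 + 2 * L) * (b * m)) * c := by
          gcongr
          exacts [h.abs_N_sub_le, h.abs_τ_sub_le]
      _ = b * (2 + R / 2 + 2 * L) * m * c := by ring
  have hmain : ((R + 4 * L) * a' + 4 * a) / 10 * c * m ^ 2 ≤
      angularDecay R L (a * m ^ 2) (a' * m ^ 2) 0 c := by
    calc ((R + 4 * L) * a' + 4 * a) / 10 * c * m ^ 2
        ≤ angularDecay R L a a' 0 c * m ^ 2 := by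
          gcongr
          exact curvature_mul_le_angularDecay_zero hR hL ha' hκ hc hc2
      _ = angularDecay R L (a * m ^ 2) (a' * m ^ 2) 0 c := by
          rw [angularDecay, angularDecay]; ring
  have hperturb_q := (abs_le.1 (abs_angularDecay_sub_zero_le hR hL N τ hq4 hc)).1
  have hperturb_Nτ := (abs_le.1
    (abs_angularDecay_zero_sub_le hR hL N (a * m ^ 2) τ (a' * m ^ 2) hc)).1
  linarith

end IsDiffusiveScaling

theorem exists_norm_rescaledDiffusion_le {R L a a' b : ℝ} (hR : 0 ≤ R) (hL : 0 ≤ L)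
    (ha' : 0 ≤ a') (hκ : 0 < (R + 4 * L) * a' + 4 * a) :
    ∃ C > (0 : ℝ), ∃ m₀ ≥ (4 : ℝ), ∀ m ≥ m₀, ∀ (X N : ℤ) (τ S r : ℝ), 0 < r → r < 1 →
      IsDiffusiveScaling R L a a' b m S X N τ →
      ‖rescaledDiffusion R L m X N τ r‖ ≤ C * Real.exp (-|S|) := by
  set κ := (R + 4 * L) * a' + 4 * a with hκ_def
  set B := 1 + 8 * (|a| + b) + (R / 2 + 2 * L) * (|a'| + b) with hB
  set E := 56 * (|a| + b) + (R + 4 * L) * (|a'| + b) + b * (2 + R / 2 + 2 * L) with hE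
  refine ⟨Real.exp B * √(40 * π / κ) / 4, by positivity, max 4 (E / (κ / 20)), le_max_left _ _, ?_⟩
  intro m hm X N τ S r hr hr1 h
  have hm4 : 4 ≤ m := (le_max_left _ _).trans hm
  have hm0 : 0 < m := by linarith
  have hEm : E ≤ κ / 20 * m := (div_le_iff₀' (by positivity)).1 ((le_max_right _ _).trans hm)
  obtain ⟨q, hq, hqS⟩ := exists_abs_le_inv_and_mul_eq_neg_abs hm0 S
  have hexp : Real.exp q < 2 := by
    have hq4 : |q| ≤ 1 / 4 := hq.trans (one_div_le_one_div_of_le (by norm_num) hm4)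
    linarith [(abs_le.1 (Real.abs_exp_sub_one_le (x := q) (by linarith))).2]
  have hdecay : ∀ c, 0 ≤ c → c ≤ 2 →
      radialExponent R L X N τ q - angularDecay R L N τ q c ≤ B - |S| - κ / 20 * m ^ 2 * c := by
    intro c hc hc2
    have hradial := h.radialExponent_le hR hL hm4 hq hqS
    have hangular := h.le_angularDecay hR hL ha' hκ.le hm4 hq hc hc2
    rw [← hB] at hradial
    rw [← hκ_def, ← hE] at hangular
    have herror : E * (m * c) ≤ κ / 20 * m * (m * c) := by gcongr
    linarith
  calc ‖rescaledDiffusion R L m X N τ r‖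
      ≤ m * Real.exp (B - |S|) * √(2 * π / (κ / 20 * m ^ 2)) / 4 :=
        norm_rescaledDiffusion_le hm0.le hexp (by positivity) hr hr1 hdecay
    _ = Real.exp B * √(40 * π / κ) / 4 * Real.exp (-|S|) := by
        rw [show 2 * π / (κ / 20 * m ^ 2) = 40 * π / κ / m ^ 2 by field_simp; norm_num,
          Real.sqrt_div (by positivity), Real.sqrt_sq hm0.le, sub_eq_add_neg, Real.exp_add]
        field_simp

theorem rpow_two_thirds_eq_sq {T : ℝ} (hT : 0 ≤ T) :
    T ^ ((2 : ℝ) / 3) = (T ^ ((1 : ℝ) / 3)) ^ 2 := by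
  rw [← Real.rpow_mul_natCast hT]
  norm_num

theorem abs_tscale_sub_tscale_sub_le (θ p₀ p₁ p₂ u₁ u₂ : ℝ) {T : ℝ} (hT : 0 ≤ T) :
    |tscale θ p₀ p₁ p₂ T u₁ - tscale θ p₀ p₁ p₂ T u₂ -
        (p₁ + 1) * (u₂ - u₁) * (T ^ ((1 : ℝ) / 3)) ^ 2| ≤
      |1 / 2 * p₂ * (u₂ ^ 2 - u₁ ^ 2)| * T ^ ((1 : ℝ) / 3) := by
  refine le_of_eq ?_
  rw [tscale, tscale, rpow_two_thirds_eq_sq hT, ← abs_of_nonneg (Real.rpow_nonneg hT (1 / 3)),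
    ← abs_mul, ← abs_neg, abs_of_nonneg (Real.rpow_nonneg hT (1 / 3))]
  congr 1
  ring

theorem abs_nscale_sub_nscale_sub_le (θ p₀ p₁ p₂ u₁ u₂ : ℝ) {T : ℝ} (hT : 0 ≤ T) :
    |((nscale θ p₀ p₁ p₂ T u₂ - nscale θ p₀ p₁ p₂ T u₁ : ℤ) : ℝ) -
        (1 - p₁) * (u₂ - u₁) * (T ^ ((1 : ℝ) / 3)) ^ 2| ≤
      |1 / 2 * p₂ * (u₂ ^ 2 - u₁ ^ 2)| * T ^ ((1 : ℝ) / 3) + 1 := by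
  rw [nscale, nscale, rpow_two_thirds_eq_sq hT]
  have hm : 0 ≤ T ^ ((1 : ℝ) / 3) := by positivity
  set m := T ^ ((1 : ℝ) / 3)
  set y₁ := (p₀ - θ) * T + (1 - p₁) * u₁ * m ^ 2 + 1 / 2 * p₂ * u₁ ^ 2 * m with hy₁
  set y₂ := (p₀ - θ) * T + (1 - p₁) * u₂ * m ^ 2 + 1 / 2 * p₂ * u₂ ^ 2 * m with hy₂
  calc |((⌊y₂⌋ - ⌊y₁⌋ : ℤ) : ℝ) - (1 - p₁) * (u₂ - u₁) * m ^ 2|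
      = |1 / 2 * p₂ * (u₂ ^ 2 - u₁ ^ 2) * m + (((⌊y₂⌋ - ⌊y₁⌋ : ℤ) : ℝ) - (y₂ - y₁))| := by
        congr 1
        rw [hy₁, hy₂]
        ring
    _ ≤ |1 / 2 * p₂ * (u₂ ^ 2 - u₁ ^ 2)| * m + |((⌊y₂⌋ - ⌊y₁⌋ : ℤ) : ℝ) - (y₂ - y₁)| := by
        refine (abs_add_le _ _).trans_eq ?_
        rw [abs_mul, abs_of_nonneg hm]
    _ ≤ |1 / 2 * p₂ * (u₂ ^ 2 - u₁ ^ 2)| * m + 1 := by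
        gcongr
        exact abs_floor_sub_floor_sub_le y₂ y₁

theorem abs_xscale_sub_xscale_sub_le (R L θ p₀ p₁ p₂ T u₁ u₂ s₁ s₂ : ℝ) :
    |((xscale R L θ p₀ p₁ p₂ T u₁ s₁ - xscale R L θ p₀ p₁ p₂ T u₂ s₂ : ℤ) : ℝ) -
        (2 * ((nscale θ p₀ p₁ p₂ T u₂ - nscale θ p₀ p₁ p₂ T u₁ : ℤ) : ℝ) +
          (R / 2 - 2 * L) * (tscale θ p₀ p₁ p₂ T u₁ - tscale θ p₀ p₁ p₂ T u₂) -
          (s₁ - s₂) * T ^ ((1 : ℝ) / 3))| ≤ 1 := by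
  rw [xscale, xscale]
  convert abs_floor_sub_floor_sub_le _ _ using 3
  push_cast
  ring

theorem isDiffusiveScaling_scale_sub (R L θ p₀ p₁ p₂ u₁ u₂ s₁ s₂ : ℝ) {T : ℝ} (hT : 1 ≤ T) :
    IsDiffusiveScaling R L ((1 - p₁) * (u₂ - u₁)) ((p₁ + 1) * (u₂ - u₁))
      (|1 / 2 * p₂ * (u₂ ^ 2 - u₁ ^ 2)| + 1) (T ^ ((1 : ℝ) / 3)) (s₁ - s₂)
      ((xscale R L θ p₀ p₁ p₂ T u₁ s₁ - xscale R L θ p₀ p₁ p₂ T u₂ s₂ : ℤ) : ℝ)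
      ((nscale θ p₀ p₁ p₂ T u₂ - nscale θ p₀ p₁ p₂ T u₁ : ℤ) : ℝ)
      (tscale θ p₀ p₁ p₂ T u₁ - tscale θ p₀ p₁ p₂ T u₂) where
  abs_N_sub_le := (abs_nscale_sub_nscale_sub_le θ p₀ p₁ p₂ u₁ u₂ (by linarith)).trans <| by
    linarith [Real.one_le_rpow hT (by norm_num : (0 : ℝ) ≤ 1 / 3)]
  abs_τ_sub_le := (abs_tscale_sub_tscale_sub_le θ p₀ p₁ p₂ u₁ u₂ (by linarith)).trans <| by
    linarith [Real.one_le_rpow hT (by norm_num : (0 : ℝ) ≤ 1 / 3)]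
  abs_X_sub_le := abs_xscale_sub_xscale_sub_le R L θ p₀ p₁ p₂ T u₁ u₂ s₁ s₂

theorem stmt17_general (R L θ p₀ p₁ p₂ : ℝ) (hR : 0 ≤ R) (hL : 0 ≤ L) (hp₁ : -1 ≤ p₁)
    (hκ : 0 < (R + 4 * L) * (p₁ + 1) + 4 * (1 - p₁)) (u₁ u₂ : ℝ) (hu : u₁ < u₂) :
    ∃ C > (0 : ℝ), ∃ T₀ > (0 : ℝ), ∀ T ≥ T₀, ∀ s₁ s₂ : ℝ, ∀ r : ℝ, 0 < r → r < 1 →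
      ‖(2 : ℂ) ^ (xscale R L θ p₀ p₁ p₂ T u₂ s₂ - xscale R L θ p₀ p₁ p₂ T u₁ s₁) *
          cexp (((tscale θ p₀ p₁ p₂ T u₂ - tscale θ p₀ p₁ p₂ T u₁) * (2 * L + R / 2) : ℝ) : ℂ) *
          ((T ^ ((1 : ℝ) / 3) : ℝ) : ℂ) * (2 * (π : ℂ) * I)⁻¹ *
          ∮ w in C(0, r),
            w ^ (-(xscale R L θ p₀ p₁ p₂ T u₁ s₁ - xscale R L θ p₀ p₁ p₂ T u₂ s₂ + 1)) *
              (w / (1 - w)) ^ (nscale θ p₀ p₁ p₂ T u₂ - nscale θ p₀ p₁ p₂ T u₁) *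
              cexp (((R : ℂ) * w + (L : ℂ) / w) *
                ((tscale θ p₀ p₁ p₂ T u₁ - tscale θ p₀ p₁ p₂ T u₂ : ℝ) : ℂ))‖
        ≤ C * Real.exp (-|s₁ - s₂|) := by
  have hu' : 0 < u₂ - u₁ := sub_pos.2 hu
  have hκ' : 0 < (R + 4 * L) * ((p₁ + 1) * (u₂ - u₁)) + 4 * ((1 - p₁) * (u₂ - u₁)) := by
    linarith [mul_pos hκ hu']
  obtain ⟨C, hC, m₀, hm₀, hbound⟩ := exists_norm_rescaledDiffusion_le hR hL
    (mul_nonneg (neg_le_iff_add_nonneg.1 hp₁) hu'.le) hκ'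
  refine ⟨C, hC, m₀ ^ 3, by positivity, fun T hT s₁ s₂ r hr hr1 ↦ ?_⟩
  have hT1 : 1 ≤ T := (one_le_pow₀ (by linarith)).trans hT
  have hm : m₀ ≤ T ^ ((1 : ℝ) / 3) := by
    rw [one_div, Real.le_rpow_inv_iff_of_pos (by positivity) (by positivity) (by norm_num)]
    exact_mod_cast hT
  have h := hbound _ hm _ _ _ _ r hr hr1
    (isDiffusiveScaling_scale_sub R L θ p₀ p₁ p₂ u₁ u₂ s₁ s₂ hT1)
  rwa [rescaledDiffusion, neg_sub, neg_sub] at h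

/-- bound on the conjugated, rescaled diffusion term of the
flat-initial-condition PushASEP kernel: for fixed `u₁ < u₂` there are `C, T₀ > 0`
such that for all `T ≥ T₀` and all `s₁, s₂` the term is bounded by `C e^{−|s₁−s₂|}`. -/
theorem stmt17 (R L θ p₀ p₁ p₂ : ℝ) (hR : 0 ≤ R) (hL : 0 ≤ L)
    (hRL : 0 < 8*L + R) (hθ : 0 < θ) (hp₀ : θ ≤ p₀) (hp₁ : |p₁| ≤ 1)
    (hκ : 0 < (R + 4*L) * (p₁ + 1) + 4 * (1 - p₁))
    (u₁ u₂ : ℝ) (hu : u₁ < u₂) :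
    ∃ C > (0 : ℝ), ∃ T₀ > (0 : ℝ), ∀ T ≥ T₀, ∀ s₁ s₂ : ℝ,
      ∀ r : ℝ, 0 < r → r < 1 →
      ‖(2 : ℂ) ^ (xscale R L θ p₀ p₁ p₂ T u₂ s₂ - xscale R L θ p₀ p₁ p₂ T u₁ s₁) *
          Complex.exp ((((tscale θ p₀ p₁ p₂ T u₂ - tscale θ p₀ p₁ p₂ T u₁)
              * (2*L + R/2) : ℝ) : ℂ)) *
          ((T ^ ((1 : ℝ)/3) : ℝ) : ℂ) * (2 * (Real.pi : ℂ) * Complex.I)⁻¹ *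
          ∮ w in C(0, r),
            w ^ (-(xscale R L θ p₀ p₁ p₂ T u₁ s₁ - xscale R L θ p₀ p₁ p₂ T u₂ s₂ + 1)) *
              (w / (1 - w)) ^ (nscale θ p₀ p₁ p₂ T u₂ - nscale θ p₀ p₁ p₂ T u₁) *
              Complex.exp (((R : ℂ) * w + (L : ℂ) / w) *
                (((tscale θ p₀ p₁ p₂ T u₁ - tscale θ p₀ p₁ p₂ T u₂) : ℝ) : ℂ))‖
        ≤ C * Real.exp (-|s₁ - s₂|) := by
  exact stmt17_general R L θ p₀ p₁ p₂ hR hL (abs_le.1 hp₁).1 hκ u₁ u₂ hu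
end

section
/- Fix u₁, u₂ and ℓ > 0. There exist constants C > 0 and T₀ > 0 such that for every T ≥ T₀ and all (s₁, s₂) ∈ [−ℓ, ∞)², | 2^{x₂−x₁} e^{(t₂−t₁)(2L+R/2)} · (T^{1/3}/(2πi)) ∮_{|z−1|=r} e^{R t₁ (1−z) + L t₁/(1−z) − R t₂ z − L t₂/z} z^{n₁+n₂+x₂} (1−z)^{−(n₁+n₂+x₁+1)} dz | ≤ C e^{−(s₁+s₂)}, where n_i = n(u_i), t_i = t(u_i), x_i = x(u_i, s_i), and the integral is over a positively oriented circle of any radius r ∈ (0,1) centered at 1 (enclosing z = 1 but not z = 0; the value is independent of such r). -/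
open Complex MeasureTheory
open scoped Real

/-!
Write `φ` for `phase R L` below. On `(0, 1)` the logarithm of the modulus of the integrand is
`t₁ φ(1 - x) - t₂ φ(x)`, up to logarithms of `x` and `1 - x` whose coefficients are the deviations
of the exponents from `v̄ t`. The speed `v̄` is the one for which `1/2` is a critical point of `φ`;
as both times are `(p₀ + θ) T + O(T^{2/3})`, the leading part `φ(1 - x) - φ(x)`, which is odd about
`1/2`, then has a double critical point there, with third derivative `16 (8L + R) > 0`.
Conjugation divides the integrand by its value at `1/2`, up to a factor 2. Shift the contour to the
circle through `1/2 + b T^{-1/3}`. For large fixed `b` the modulus on that circle is at most its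
value at `1/2 + b T^{-1/3}` times a Gaussian of width `T^{-1/3}`, and relative to `1/2` this value
is `e^{O(1) - (s₁ + s₂)}`. The width of the Gaussian cancels the prefactor `T^{1/3}`.
-/

section Logarithm

lemma abs_log_one_add_sub_self_le {x : ℝ} (hx : |x| ≤ 1 / 2) :
    |Real.log (1 + x) - x| ≤ 2 * x ^ 2 := by
  have hx₁ := (abs_le.1 hx).1
  have upper : Real.log (1 + x) ≤ x := by
    linarith [Real.log_le_sub_one_of_pos (x := 1 + x) (by linarith)]
  have lower : 1 - (1 + x)⁻¹ ≤ Real.log (1 + x) :=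
    Real.one_sub_inv_le_log_of_pos (by linarith)
  have remainder : x - 2 * x ^ 2 ≤ 1 - (1 + x)⁻¹ := by
    have hpos : 0 < 1 + x := by linarith
    rw [← sub_nonneg, show 1 - (1 + x)⁻¹ - (x - 2 * x ^ 2) = x ^ 2 * (1 + 2 * x) / (1 + x) by
      field_simp; ring]
    have : 0 ≤ 1 + 2 * x := by linarith
    positivity
  rw [abs_le]
  constructor <;> linarith [sq_nonneg x]

lemma two_mul_le_log_one_add_sub_log_one_sub {x : ℝ} (h₀ : 0 ≤ x) (h₁ : x < 1) :
    2 * x ≤ Real.log (1 + x) - Real.log (1 - x) := by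
  have h := Real.sum_range_le_log_div h₀ h₁ 1
  rw [Real.log_div (by linarith) (by linarith)] at h
  simp only [Finset.sum_range_one, mul_zero, zero_add, pow_one, Nat.cast_zero, div_one] at h
  linarith

lemma log_one_add_sub_log_one_sub_le {x : ℝ} (h₀ : 0 ≤ x) (h₁ : x < 1) :
    Real.log (1 + x) - Real.log (1 - x) ≤ 2 * x + 2 * (x ^ 3 / (1 - x ^ 2)) := by
  have h := Real.log_div_le_sum_range_add h₀ h₁ 1
  rw [Real.log_div (by linarith) (by linarith)] at h
  simp only [Finset.sum_range_one, mul_zero, zero_add, pow_one, Nat.cast_zero, div_one,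
    mul_one, Nat.reduceAdd] at h
  linarith

end Logarithm

section CircleIntegral

variable {E : Type*} [NormedAddCommGroup E] [NormedSpace ℂ E]

lemma integral_exp_neg_mul_one_add_cos_le {k : ℝ} (hk : 0 < k) :
    ∫ φ in (0 : ℝ)..2 * π, Real.exp (-(k * (1 + Real.cos φ))) ≤ √(π ^ 3 / (2 * k)) := by
  have hk' : 0 < k * (2 / π ^ 2) := by positivity
  have gaussian_integrable :
      Integrable fun φ : ℝ ↦ Real.exp (-(k * (2 / π ^ 2)) * (φ - π) ^ 2) :=
    (integrable_exp_neg_mul_sq hk').comp_sub_right π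
  have le_gaussian : ∀ φ ∈ Set.Ioc 0 (2 * π),
      Real.exp (-(k * (1 + Real.cos φ))) ≤ Real.exp (-(k * (2 / π ^ 2)) * (φ - π) ^ 2) := by
    rintro φ ⟨hφ₀, hφ₁⟩
    have hcos := Real.cos_le_one_sub_mul_cos_sq (x := φ - π)
      (abs_le.2 ⟨by linarith, by linarith⟩)
    rw [Real.cos_sub_pi] at hcos
    have := mul_le_mul_of_nonneg_left
      (show 2 / π ^ 2 * (φ - π) ^ 2 ≤ 1 + Real.cos φ by linarith) hk.le
    exact Real.exp_le_exp.2 (by linarith)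
  calc ∫ φ in (0 : ℝ)..2 * π, Real.exp (-(k * (1 + Real.cos φ)))
      = ∫ φ in Set.Ioc 0 (2 * π), Real.exp (-(k * (1 + Real.cos φ))) :=
        intervalIntegral.integral_of_le (by positivity)
    _ ≤ ∫ φ in Set.Ioc 0 (2 * π), Real.exp (-(k * (2 / π ^ 2)) * (φ - π) ^ 2) :=
        setIntegral_mono_on
          ((Continuous.integrableOn_Icc (by fun_prop)).mono_set Set.Ioc_subset_Icc_self)
          gaussian_integrable.integrableOn measurableSet_Ioc le_gaussian
    _ ≤ ∫ φ : ℝ, Real.exp (-(k * (2 / π ^ 2)) * (φ - π) ^ 2) :=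
        setIntegral_le_integral gaussian_integrable
          (Filter.Eventually.of_forall fun _ ↦ (Real.exp_pos _).le)
    _ = √(π / (k * (2 / π ^ 2))) := by
        rw [integral_sub_right_eq_self fun φ : ℝ ↦ Real.exp (-(k * (2 / π ^ 2)) * φ ^ 2),
          integral_gaussian]
    _ = √(π ^ 3 / (2 * k)) := by
        congr 1
        field_simp

lemma norm_circleIntegral_le_of_norm_le_exp {f : ℂ → E} {c : ℂ} {ρ B k : ℝ} (hρ : 0 < ρ)
    (hk : 0 < k)
    (hf : ∀ z ∈ Metric.sphere c ρ, ‖f z‖ ≤ B * Real.exp (-(k * (z.re - (c.re - ρ))))) :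
    ‖∮ z in C(c, ρ), f z‖ ≤ ρ * B * √(π ^ 3 / (2 * (k * ρ))) := by
  have hB : 0 ≤ B := by
    have hz : circleMap c ρ 0 ∈ Metric.sphere c ρ := circleMap_mem_sphere c hρ.le 0
    exact nonneg_of_mul_nonneg_left ((norm_nonneg _).trans (hf _ hz)) (Real.exp_pos _)
  have norm_integrand_le : ∀ φ : ℝ, ‖deriv (circleMap c ρ) φ • f (circleMap c ρ φ)‖ ≤
      ρ * B * Real.exp (-(k * ρ * (1 + Real.cos φ))) := by
    intro φ
    have hre : (circleMap c ρ φ).re - (c.re - ρ) = ρ * (1 + Real.cos φ) := by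
      simp only [circleMap, Complex.add_re, Complex.re_ofReal_mul, Complex.exp_ofReal_mul_I_re]
      ring
    have hφ := hf _ (circleMap_mem_sphere c hρ.le φ)
    rw [hre, ← mul_assoc] at hφ
    rw [norm_smul, deriv_circleMap, norm_mul, norm_circleMap_zero, Complex.norm_I, mul_one,
      abs_of_pos hρ, mul_assoc]
    exact mul_le_mul_of_nonneg_left hφ hρ.le
  calc ‖∮ z in C(c, ρ), f z‖
      ≤ ∫ φ in (0 : ℝ)..2 * π, ρ * B * Real.exp (-(k * ρ * (1 + Real.cos φ))) :=
        intervalIntegral.norm_integral_le_of_norm_le (by positivity)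
          (Filter.Eventually.of_forall fun φ _ ↦ norm_integrand_le φ)
          (Continuous.intervalIntegrable (by fun_prop) _ _)
    _ = ρ * B * ∫ φ in (0 : ℝ)..2 * π, Real.exp (-(k * ρ * (1 + Real.cos φ))) :=
        intervalIntegral.integral_const_mul _ _
    _ ≤ ρ * B * √(π ^ 3 / (2 * (k * ρ))) := by
        gcongr
        exact integral_exp_neg_mul_one_add_cos_le (by positivity)

lemma circleIntegral_eq_of_differentiableOn_ball_diff_center [CompleteSpace E] {f : ℂ → E}
    {c : ℂ} {r₀ r₁ r₂ : ℝ} (hf : DifferentiableOn ℂ f (Metric.ball c r₀ \ {c}))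
    (h₁ : r₁ ∈ Set.Ioo 0 r₀) (h₂ : r₂ ∈ Set.Ioo 0 r₀) :
    ∮ z in C(c, r₁), f z = ∮ z in C(c, r₂), f z := by
  wlog h : r₂ ≤ r₁ generalizing r₁ r₂
  · exact (this h₂ h₁ (le_of_not_ge h)).symm
  have annulus_subset :
      Metric.closedBall c r₁ \ Metric.ball c r₂ ⊆ Metric.ball c r₀ \ {c} := fun z hz ↦
    ⟨Metric.closedBall_subset_ball h₁.2 hz.1, fun hzc ↦ hz.2 (hzc ▸ Metric.mem_ball_self h₂.1)⟩
  refine Complex.circleIntegral_eq_of_differentiable_on_annulus_off_countable h₂.1 h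
    Set.countable_empty (hf.mono annulus_subset).continuousOn fun z hz ↦ ?_
  have hz' : z ∈ Metric.ball c r₀ \ {c} := annulus_subset
    (Set.sdiff_subset_sdiff Metric.ball_subset_closedBall Metric.ball_subset_closedBall hz.1)
  exact hf.differentiableAt ((Metric.isOpen_ball.sdiff isClosed_singleton).mem_nhds hz')

end CircleIntegral

namespace PushASEP

section Phase

/-- The mean speed `v̄ = R/2 - 2L` of a PushASEP particle started from the flat configuration. -/
noncomputable def meanSpeed (R L : ℝ) : ℝ := R / 2 - 2 * L

/-- The coefficient `Re (R z + L / z) - v̄ log |z|` of the times in the logarithm of the modulus of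
the kernel integrand: `t₁` comes with `phase R L (1 - z)` and `t₂` with `-phase R L z`. -/
noncomputable def phase (R L : ℝ) (z : ℂ) : ℝ :=
  R * z.re + L * (z⁻¹).re - meanSpeed R L * Real.log ‖z‖

variable {R L : ℝ}

lemma phase_ofReal (x : ℝ) :
    phase R L x = R * x + L / x - meanSpeed R L * Real.log x := by
  rw [phase, ← Complex.ofReal_inv, Complex.ofReal_re, Complex.ofReal_re, Complex.norm_real,
    Real.norm_eq_abs, Real.log_abs, div_eq_mul_inv]

lemma abs_meanSpeed_le (hR : 0 ≤ R) (hL : 0 ≤ L) : |meanSpeed R L| ≤ 2 * (R + L) := by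
  rw [meanSpeed, abs_le]
  constructor <;> linarith

lemma log_half_add {h : ℝ} (hh : |h| ≤ 1 / 4) :
    Real.log (1 / 2 + h) = Real.log (1 + 2 * h) - Real.log 2 := by
  have := (abs_le.1 hh).1
  rw [← Real.log_div (by linarith) two_ne_zero]
  congr 1
  ring

lemma log_half_sub {h : ℝ} (hh : |h| ≤ 1 / 4) :
    Real.log (1 / 2 - h) = Real.log (1 - 2 * h) - Real.log 2 := by
  simpa only [sub_eq_add_neg, mul_neg] using log_half_add (h := -h) (by rwa [abs_neg])

-- The linear term is `(R - 4L - 2v̄) h = 0`: `v̄` is the speed making `1/2` a critical point.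
lemma abs_phase_half_add_sub_le (hR : 0 ≤ R) (hL : 0 ≤ L) {h : ℝ} (hh : |h| ≤ 1 / 4) :
    |phase R L ↑(1 / 2 + h) - phase R L ↑(1 / 2 : ℝ)| ≤ 32 * (R + L) * h ^ 2 := by
  have hh₁ := (abs_le.1 hh).1
  have hpos : 0 < 1 + 2 * h := by linarith
  have log_error : |Real.log (1 + 2 * h) - 2 * h| ≤ 8 * h ^ 2 := by
    have := abs_log_one_add_sub_self_le (x := 2 * h) (by rw [abs_mul, abs_two]; linarith)
    linarith
  have expansion : phase R L ↑(1 / 2 + h) - phase R L ↑(1 / 2 : ℝ) =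
      8 * L * (h ^ 2 / (1 + 2 * h)) - meanSpeed R L * (Real.log (1 + 2 * h) - 2 * h) := by
    have hlog : Real.log (1 / 2) = -Real.log 2 := by rw [one_div, Real.log_inv]
    have hinv : L / (1 / 2 + h) = 2 * L - 4 * L * h + 8 * L * (h ^ 2 / (1 + 2 * h)) := by
      rw [show (1 / 2 + h : ℝ) = (1 + 2 * h) / 2 by ring]
      field_simp
      ring
    rw [phase_ofReal, phase_ofReal, log_half_add hh, hlog, hinv, meanSpeed]
    ring
  have inv_error : h ^ 2 / (1 + 2 * h) ≤ 2 * h ^ 2 := by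
    rw [div_le_iff₀ hpos]
    nlinarith [sq_nonneg h]
  calc |phase R L ↑(1 / 2 + h) - phase R L ↑(1 / 2 : ℝ)|
      ≤ |8 * L * (h ^ 2 / (1 + 2 * h))| +
          |meanSpeed R L| * |Real.log (1 + 2 * h) - 2 * h| := by
        rw [expansion, ← abs_mul]
        exact abs_sub _ _
    _ ≤ 8 * L * (2 * h ^ 2) + 2 * (R + L) * (8 * h ^ 2) := by
        rw [abs_of_nonneg (by positivity)]
        gcongr
        exact abs_meanSpeed_le hR hL
    _ ≤ 32 * (R + L) * h ^ 2 := by nlinarith [mul_nonneg hR (sq_nonneg h)]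

lemma abs_phase_half_sub_sub_le (hR : 0 ≤ R) (hL : 0 ≤ L) {h : ℝ} (hh : |h| ≤ 1 / 4) :
    |phase R L ↑(1 / 2 - h) - phase R L ↑(1 / 2 : ℝ)| ≤ 32 * (R + L) * h ^ 2 := by
  simpa only [← sub_eq_add_neg, neg_sq] using
    abs_phase_half_add_sub_le hR hL (h := -h) (by rwa [abs_neg])

lemma phase_half_sub_sub_phase_half_add_le (hR : 0 ≤ R) (hL : 0 ≤ L) {h : ℝ} (h₀ : 0 ≤ h)
    (h₁ : h ≤ 1 / 4) :
    phase R L ↑(1 / 2 - h) - phase R L ↑(1 / 2 + h) ≤ 48 * (R + L) * h ^ 3 := by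
  have hh : |h| ≤ 1 / 4 := by rwa [abs_of_nonneg h₀]
  have hpos : 0 < 1 - 2 * h := by linarith
  set E := h ^ 3 / (1 - (2 * h) ^ 2) with hE
  have hE_le : E ≤ 4 / 3 * h ^ 3 := by
    have hden : 3 / 4 ≤ 1 - (2 * h) ^ 2 := by nlinarith
    rw [hE, div_le_iff₀ (by linarith)]
    linarith [mul_le_mul_of_nonneg_left hden (pow_nonneg h₀ 3)]
  set l := Real.log (1 + 2 * h) - Real.log (1 - 2 * h) - 4 * h with hl
  have hl₀ : 0 ≤ l := by
    linarith [two_mul_le_log_one_add_sub_log_one_sub (x := 2 * h) (by linarith) (by linarith)]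
  have hl_le : l ≤ 16 * E := by
    have := log_one_add_sub_log_one_sub_le (x := 2 * h) (by linarith) (by linarith)
    rw [mul_pow 2 h 3, mul_div_assoc, ← hE] at this
    linarith
  have expansion : phase R L ↑(1 / 2 - h) - phase R L ↑(1 / 2 + h) =
      32 * L * E + meanSpeed R L * l := by
    have hinv : L / (1 / 2 - h) - L / (1 / 2 + h) = 8 * L * h + 32 * L * E := by
      have : 0 < 1 + 2 * h := by linarith
      rw [hE, show (1 / 2 - h : ℝ) = (1 - 2 * h) / 2 by ring,
        show (1 / 2 + h : ℝ) = (1 + 2 * h) / 2 by ring,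
        show 1 - (2 * h) ^ 2 = (1 - 2 * h) * (1 + 2 * h) by ring]
      field_simp
      ring
    rw [phase_ofReal, phase_ofReal, log_half_add hh, log_half_sub hh, hl, meanSpeed]
    linear_combination hinv
  have speed_le : meanSpeed R L * l ≤ R / 2 * (16 * E) := by
    have hv : meanSpeed R L ≤ R / 2 := by rw [meanSpeed]; linarith
    gcongr
  nlinarith [mul_le_mul_of_nonneg_left hE_le hR, mul_le_mul_of_nonneg_left hE_le hL,
    mul_nonneg hR (pow_nonneg h₀ 3), mul_nonneg hL (pow_nonneg h₀ 3)]

end Phase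

section Circle

variable {R L ρ : ℝ} {z : ℂ}

lemma re_sub_one_sub_nonneg (hz : ‖1 - z‖ = ρ) : 0 ≤ z.re - (1 - ρ) := by
  have h := Complex.re_le_norm (1 - z)
  rw [Complex.sub_re, Complex.one_re, hz] at h
  linarith

lemma norm_sq_eq_of_norm_one_sub_eq (hz : ‖1 - z‖ = ρ) :
    ‖z‖ ^ 2 = (1 - ρ) ^ 2 + 2 * (z.re - (1 - ρ)) := by
  rw [← hz, Complex.sq_norm, sub_sq, Complex.sq_norm, Complex.normSq_sub]
  simp only [map_one, one_mul, Complex.conj_re]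
  ring

lemma one_sub_sq_le_norm_sq (hz : ‖1 - z‖ = ρ) : (1 - ρ) ^ 2 ≤ ‖z‖ ^ 2 := by
  linarith [norm_sq_eq_of_norm_one_sub_eq hz, re_sub_one_sub_nonneg hz]

lemma two_mul_log_norm_sub_log_one_sub (hz : ‖1 - z‖ = ρ) (h₁ : ρ < 1) :
    2 * (Real.log ‖z‖ - Real.log (1 - ρ)) = Real.log (‖z‖ ^ 2 / (1 - ρ) ^ 2) := by
  have hpos : 0 < (1 - ρ) ^ 2 := pow_pos (by linarith) 2
  rw [Real.log_div (hpos.trans_le (one_sub_sq_le_norm_sq hz)).ne' hpos.ne', Real.log_pow,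
    Real.log_pow]
  push_cast
  ring

lemma log_norm_sub_log_one_sub_le (hz : ‖1 - z‖ = ρ) (h₁ : ρ < 1) :
    Real.log ‖z‖ - Real.log (1 - ρ) ≤ (z.re - (1 - ρ)) / (1 - ρ) ^ 2 := by
  have hpos : 0 < (1 - ρ) ^ 2 := pow_pos (by linarith) 2
  have h := Real.log_le_sub_one_of_pos
    (div_pos (hpos.trans_le (one_sub_sq_le_norm_sq hz)) hpos)
  rw [← two_mul_log_norm_sub_log_one_sub hz h₁, norm_sq_eq_of_norm_one_sub_eq hz, add_div,
    div_self hpos.ne', mul_div_assoc] at h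
  linarith

lemma log_norm_sub_log_one_sub_le_four_mul (hz : ‖1 - z‖ = ρ) (hρ : ρ ≤ 1 / 2) :
    Real.log ‖z‖ - Real.log (1 - ρ) ≤ 4 * (z.re - (1 - ρ)) := by
  have hsq : 1 / 4 ≤ (1 - ρ) ^ 2 := by nlinarith
  refine (log_norm_sub_log_one_sub_le hz (by linarith)).trans ?_
  rw [div_le_iff₀ (by linarith)]
  linarith [mul_le_mul_of_nonneg_left hsq (re_sub_one_sub_nonneg hz)]

lemma div_norm_sq_le_log_norm_sub_log_one_sub (hz : ‖1 - z‖ = ρ) (h₁ : ρ < 1) :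
    (z.re - (1 - ρ)) / ‖z‖ ^ 2 ≤ Real.log ‖z‖ - Real.log (1 - ρ) := by
  have hpos : 0 < (1 - ρ) ^ 2 := pow_pos (by linarith) 2
  have hz_pos : 0 < ‖z‖ ^ 2 := hpos.trans_le (one_sub_sq_le_norm_sq hz)
  have h := Real.one_sub_inv_le_log_of_pos (div_pos hz_pos hpos)
  have expand : 1 - (‖z‖ ^ 2 / (1 - ρ) ^ 2)⁻¹ = 2 * ((z.re - (1 - ρ)) / ‖z‖ ^ 2) := by
    rw [inv_div, one_sub_div hz_pos.ne', ← mul_div_assoc, norm_sq_eq_of_norm_one_sub_eq hz]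
    ring
  rw [expand, ← two_mul_log_norm_sub_log_one_sub hz h₁] at h
  linarith

lemma phase_one_sub_sub_phase (hz : ‖1 - z‖ = ρ) (h₀ : 0 < ρ) :
    phase R L (1 - z) - phase R L ρ = -((z.re - (1 - ρ)) * (R + L / ρ ^ 2)) := by
  rw [phase_ofReal, phase, Complex.inv_re, Complex.normSq_eq_norm_sq, hz, Complex.sub_re,
    Complex.one_re]
  field_simp
  ring

lemma phase_sub_phase_one_sub (hz : ‖1 - z‖ = ρ) (h₁ : ρ < 1) :
    phase R L z - phase R L ↑(1 - ρ) =
      (z.re - (1 - ρ)) * (R - L * ((1 + ρ) / ((1 - ρ) * ‖z‖ ^ 2))) -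
        meanSpeed R L * (Real.log ‖z‖ - Real.log (1 - ρ)) := by
  have hρ : 0 < 1 - ρ := by linarith
  have hz_pos : 0 < ‖z‖ ^ 2 := (pow_pos hρ 2).trans_le (one_sub_sq_le_norm_sq hz)
  have inv_diff : z.re / ‖z‖ ^ 2 - 1 / (1 - ρ) =
      -((z.re - (1 - ρ)) * ((1 + ρ) / ((1 - ρ) * ‖z‖ ^ 2))) := by
    rw [div_sub_div _ _ hz_pos.ne' hρ.ne', ← mul_div_assoc, ← neg_div, mul_comm (1 - ρ)]
    congr 1
    linear_combination -norm_sq_eq_of_norm_one_sub_eq hz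
  rw [phase_ofReal, phase, Complex.inv_re, Complex.normSq_eq_norm_sq]
  linear_combination L * inv_diff

lemma abs_phase_one_sub_sub_phase_le (hR : 0 ≤ R) (hL : 0 ≤ L) (hz : ‖1 - z‖ = ρ)
    (hρ : 1 / 4 ≤ ρ) :
    |phase R L (1 - z) - phase R L ρ| ≤ 20 * (R + L) * (z.re - (1 - ρ)) := by
  have hρ_pos : 0 < ρ := by linarith
  have hδ := re_sub_one_sub_nonneg hz
  have hdiv : L / ρ ^ 2 ≤ 16 * L := by
    have hρ_sq : 1 / 16 ≤ ρ ^ 2 := by nlinarith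
    rw [div_le_iff₀ (by positivity)]
    linarith [mul_le_mul_of_nonneg_left hρ_sq hL]
  rw [phase_one_sub_sub_phase hz hρ_pos, abs_neg, abs_of_nonneg (by positivity), mul_comm]
  gcongr
  linarith

lemma abs_phase_sub_phase_one_sub_le (hR : 0 ≤ R) (hL : 0 ≤ L) (hz : ‖1 - z‖ = ρ)
    (hρ₀ : 0 ≤ ρ) (hρ : ρ ≤ 1 / 2) :
    |phase R L z - phase R L ↑(1 - ρ)| ≤ 20 * (R + L) * (z.re - (1 - ρ)) := by
  have hδ := re_sub_one_sub_nonneg hz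
  have hα : 1 / 2 ≤ 1 - ρ := by linarith
  have : 0 < 1 - ρ := by linarith
  have hα_sq : 1 / 4 ≤ (1 - ρ) ^ 2 := by nlinarith
  have hz_sq : 1 / 4 ≤ ‖z‖ ^ 2 := hα_sq.trans (one_sub_sq_le_norm_sq hz)
  have hfrac : (1 + ρ) / ((1 - ρ) * ‖z‖ ^ 2) ≤ 12 := by
    rw [div_le_iff₀ (by positivity)]
    nlinarith
  have hrat : |R - L * ((1 + ρ) / ((1 - ρ) * ‖z‖ ^ 2))| ≤ R + 12 * L := by
    have h₀ : 0 ≤ L * ((1 + ρ) / ((1 - ρ) * ‖z‖ ^ 2)) := by positivity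
    have h₁ := mul_le_mul_of_nonneg_left hfrac hL
    exact abs_le.2 ⟨by linarith, by linarith⟩
  have hlog : |Real.log ‖z‖ - Real.log (1 - ρ)| ≤ 4 * (z.re - (1 - ρ)) := by
    have hlog₀ := div_norm_sq_le_log_norm_sub_log_one_sub hz (by linarith)
    rw [abs_of_nonneg (le_trans (by positivity) hlog₀)]
    exact log_norm_sub_log_one_sub_le_four_mul hz hρ
  calc |phase R L z - phase R L ↑(1 - ρ)|
      ≤ (z.re - (1 - ρ)) * |R - L * ((1 + ρ) / ((1 - ρ) * ‖z‖ ^ 2))| +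
          |meanSpeed R L| * |Real.log ‖z‖ - Real.log (1 - ρ)| := by
        rw [phase_sub_phase_one_sub hz (by linarith), ← abs_mul]
        refine (abs_sub _ _).trans_eq ?_
        rw [abs_mul (z.re - (1 - ρ)), abs_of_nonneg hδ]
    _ ≤ (z.re - (1 - ρ)) * (R + 12 * L) + 2 * (R + L) * (4 * (z.re - (1 - ρ))) := by
        gcongr
        exact abs_meanSpeed_le hR hL
    _ ≤ 20 * (R + L) * (z.re - (1 - ρ)) := by nlinarith [mul_nonneg hR hδ]

lemma three_mul_half_sub_le {ρ : ℝ} (h₀ : 0 ≤ ρ) (h₁ : ρ ≤ 1 / 2) :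
    3 * (1 / 2 - ρ) ≤ 2 - 1 / (1 - ρ) ^ 2 / 2 := by
  have hα : 0 < 1 - ρ := by linarith
  have factor : 2 - 1 / (1 - ρ) ^ 2 / 2 - 3 * (1 / 2 - ρ) =
      (1 / 2 - ρ) * (ρ * (4 - 3 * ρ)) / (1 - ρ) ^ 2 := by
    field_simp
    ring
  rw [← sub_nonneg, factor]
  have : 0 ≤ 1 / 2 - ρ := by linarith
  have : 0 ≤ 4 - 3 * ρ := by linarith
  positivity

lemma twentyFour_mul_half_sub_le {ρ D : ℝ} (h₀ : 0 < ρ) (h₁ : ρ ≤ 1 / 2)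
    (hD : (1 - ρ) ^ 2 ≤ D) :
    24 * (1 / 2 - ρ) ≤ 1 / ρ ^ 2 - (1 + ρ) / ((1 - ρ) * D) + 2 / D := by
  have hα : 0 < 1 - ρ := by linarith
  have hD_pos : 0 < D := (pow_pos hα 2).trans_le hD
  set y := ρ * (1 - ρ) with hy
  have hy₀ : 0 < y := hy ▸ mul_pos h₀ hα
  have hy₁ : y ≤ 1 / 4 := by rw [hy]; nlinarith [sq_nonneg (ρ - 1 / 2)]
  have bracket_nonneg : 0 ≤ 1 - 24 * (1 / 2 - ρ) * ρ ^ 2 := by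
    nlinarith [sq_nonneg (ρ - 1 / 3), sq_nonneg ρ]
  have base : 0 ≤ (1 - ρ) ^ 3 * (1 - 24 * (1 / 2 - ρ) * ρ ^ 2) + (1 - 3 * ρ) * ρ ^ 2 := by
    have factor : (1 - ρ) ^ 3 * (1 - 24 * (1 / 2 - ρ) * ρ ^ 2) + (1 - 3 * ρ) * ρ ^ 2 =
        (1 - 2 * ρ) * (1 - ρ + 2 * ρ ^ 2 - 12 * (1 - ρ) * y ^ 2) := by rw [hy]; ring
    have hy_sq : y ^ 2 ≤ 1 / 16 := by nlinarith
    rw [factor]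
    refine mul_nonneg (by linarith) ?_
    nlinarith [mul_le_mul_of_nonneg_left hy_sq hα.le, sq_nonneg (ρ - 1 / 4)]
  have mono : (1 - ρ) ^ 3 * (1 - 24 * (1 / 2 - ρ) * ρ ^ 2) ≤
      (1 - ρ) * D * (1 - 24 * (1 / 2 - ρ) * ρ ^ 2) := by
    rw [pow_succ' (1 - ρ) 2]
    gcongr
  have common : 1 / ρ ^ 2 - (1 + ρ) / ((1 - ρ) * D) + 2 / D - 24 * (1 / 2 - ρ) =
      ((1 - ρ) * D * (1 - 24 * (1 / 2 - ρ) * ρ ^ 2) + (1 - 3 * ρ) * ρ ^ 2) /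
        (ρ ^ 2 * ((1 - ρ) * D)) := by
    field_simp
    ring
  rw [← sub_nonneg, common]
  exact div_nonneg (base.trans (by linarith)) (by positivity)

-- The gain is only linear in `1/2 - ρ` because `1/2` is a double critical point.
lemma phase_sub_phase_le (hR : 0 ≤ R) (hL : 0 ≤ L) (hz : ‖1 - z‖ = ρ) (h₀ : 0 < ρ)
    (h₁ : ρ ≤ 1 / 2) :
    (phase R L (1 - z) - phase R L ρ) - (phase R L z - phase R L ↑(1 - ρ)) ≤
      -(3 * (8 * L + R) * (1 / 2 - ρ) * (z.re - (1 - ρ))) := by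
  have hρ : ρ < 1 := by linarith
  have hδ := re_sub_one_sub_nonneg hz
  have log_le := log_norm_sub_log_one_sub_le hz hρ
  have le_log := div_norm_sq_le_log_norm_sub_log_one_sub hz hρ
  rw [phase_one_sub_sub_phase hz h₀, phase_sub_phase_one_sub hz hρ, meanSpeed]
  set δ := z.re - (1 - ρ)
  set l := Real.log ‖z‖ - Real.log (1 - ρ)
  have right_jumps : 3 * (1 / 2 - ρ) * δ ≤ 2 * δ - l / 2 := by
    have h := mul_le_mul_of_nonneg_right (three_mul_half_sub_le h₀.le h₁) hδ
    have e : (2 - 1 / (1 - ρ) ^ 2 / 2) * δ = 2 * δ - δ / (1 - ρ) ^ 2 / 2 := by ring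
    linarith
  have left_jumps : 24 * (1 / 2 - ρ) * δ ≤
      δ / ρ ^ 2 - δ * ((1 + ρ) / ((1 - ρ) * ‖z‖ ^ 2)) + 2 * l := by
    have h := mul_le_mul_of_nonneg_right
      (twentyFour_mul_half_sub_le h₀ h₁ (one_sub_sq_le_norm_sq hz)) hδ
    have e : (1 / ρ ^ 2 - (1 + ρ) / ((1 - ρ) * ‖z‖ ^ 2) + 2 / ‖z‖ ^ 2) * δ =
      δ / ρ ^ 2 - δ * ((1 + ρ) / ((1 - ρ) * ‖z‖ ^ 2)) + 2 * (δ / ‖z‖ ^ 2) := by ring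
    linarith
  linear_combination R * right_jumps + L * left_jumps

end Circle

section Integrand

/-- The integrand of the main term of the flat PushASEP kernel; in the paper's notation
`k₁ = n₁ + n₂ + x₁ + 1` and `k₂ = n₁ + n₂ + x₂`. -/
noncomputable def integrand (R L t₁ t₂ : ℝ) (k₁ k₂ : ℤ) (z : ℂ) : ℂ :=
  Complex.exp ((R * t₁ : ℝ) * (1 - z) + (L * t₁ : ℝ) / (1 - z) - (R * t₂ : ℝ) * z
    - (L * t₂ : ℝ) / z) * z ^ k₂ * (1 - z) ^ (-k₁)

/-- The logarithm of the modulus of `integrand`, with the times and the deviations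
`k - v̄ t` of the exponents from their typical values separated. -/
noncomputable def logNorm (R L t₁ t₂ : ℝ) (k₁ k₂ : ℝ) (z : ℂ) : ℝ :=
  t₁ * phase R L (1 - z) - t₂ * phase R L z +
    (k₂ - meanSpeed R L * t₂) * Real.log ‖z‖ - (k₁ - meanSpeed R L * t₁) * Real.log ‖1 - z‖

variable {R L t₁ t₂ : ℝ} {k₁ k₂ : ℤ}

lemma norm_zpow_eq_exp {z : ℂ} (hz : z ≠ 0) (k : ℤ) :
    ‖z ^ k‖ = Real.exp (k * Real.log ‖z‖) := by
  rw [norm_zpow, mul_comm, Real.exp_mul, Real.exp_log (norm_pos_iff.2 hz), Real.rpow_intCast]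

lemma norm_integrand {z : ℂ} (hz₀ : z ≠ 0) (hz₁ : 1 - z ≠ 0) :
    ‖integrand R L t₁ t₂ k₁ k₂ z‖ = Real.exp (logNorm R L t₁ t₂ k₁ k₂ z) := by
  rw [integrand, norm_mul, norm_mul, norm_zpow_eq_exp hz₀, norm_zpow_eq_exp hz₁,
    Complex.norm_exp, ← Real.exp_add, ← Real.exp_add]
  simp only [div_eq_mul_inv, Complex.sub_re, Complex.add_re, Complex.re_ofReal_mul, logNorm, phase,
    Int.cast_neg]
  congr 1
  ring

lemma differentiableOn_integrand :
    DifferentiableOn ℂ (integrand R L t₁ t₂ k₁ k₂) (Metric.ball 1 1 \ {1}) := by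
  rintro z ⟨hz, hz_ne⟩
  have hz₀ : z ≠ 0 := by
    rintro rfl
    simp at hz
  have hz₁ : 1 - z ≠ 0 := sub_ne_zero.2 (Ne.symm hz_ne)
  unfold integrand
  refine DifferentiableAt.differentiableWithinAt ?_
  fun_prop (disch := first | assumption | exact Or.inl ‹_›)

lemma logNorm_half :
    logNorm R L t₁ t₂ k₁ k₂ ↑(1 / 2 : ℝ) =
      (k₁ - k₂) * Real.log 2 - (t₂ - t₁) * (2 * L + R / 2) := by
  have one_sub_half : (1 - ↑(1 / 2 : ℝ) : ℂ) = ↑(1 / 2 : ℝ) := by norm_num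
  have log_half : Real.log ‖((1 / 2 : ℝ) : ℂ)‖ = -Real.log 2 := by
    rw [Complex.norm_real, Real.norm_eq_abs, Real.log_abs, one_div, Real.log_inv]
  rw [logNorm, one_sub_half, log_half, phase_ofReal, one_div, Real.log_inv]
  ring

lemma logNorm_sub_logNorm_one_sub {k₁ k₂ ρ : ℝ} {z : ℂ} (hz : ‖1 - z‖ = ρ) :
    logNorm R L t₁ t₂ k₁ k₂ z - logNorm R L t₁ t₂ k₁ k₂ ↑(1 - ρ) =
      t₁ * (phase R L (1 - z) - phase R L ρ) - t₂ * (phase R L z - phase R L ↑(1 - ρ)) +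
        (k₂ - meanSpeed R L * t₂) * (Real.log ‖z‖ - Real.log (1 - ρ)) := by
  have one_sub_one_sub : (1 - ↑(1 - ρ) : ℂ) = ρ := by push_cast; ring
  simp only [logNorm, one_sub_one_sub, hz, Complex.norm_real, Real.norm_eq_abs, Real.log_abs]
  ring

lemma logNorm_half_add_sub_logNorm_half {k₁ k₂ h : ℝ} (hh : |h| ≤ 1 / 4) :
    logNorm R L t₁ t₂ k₁ k₂ ↑(1 / 2 + h) - logNorm R L t₁ t₂ k₁ k₂ ↑(1 / 2 : ℝ) =
      t₁ * (phase R L ↑(1 / 2 - h) - phase R L ↑(1 / 2 : ℝ)) -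
        t₂ * (phase R L ↑(1 / 2 + h) - phase R L ↑(1 / 2 : ℝ)) +
        (k₂ - meanSpeed R L * t₂) * Real.log (1 + 2 * h) -
        (k₁ - meanSpeed R L * t₁) * Real.log (1 - 2 * h) := by
  have one_sub_half : (1 - ↑(1 / 2 : ℝ) : ℂ) = ↑(1 / 2 : ℝ) := by norm_num
  have one_sub_half_add : (1 - ↑(1 / 2 + h) : ℂ) = ↑(1 / 2 - h) := by push_cast; ring
  have log_half : Real.log (1 / 2) = -Real.log 2 := by rw [one_div, Real.log_inv]
  simp only [logNorm, one_sub_half, one_sub_half_add, Complex.norm_real, Real.norm_eq_abs,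
    Real.log_abs]
  rw [log_half, log_half_add hh, log_half_sub hh]
  ring

-- The conjugation divides the integrand by its value at the critical point `1/2`, up to a factor 2.
lemma norm_conjugation :
    ‖(2 : ℂ) ^ (k₂ - k₁ + 1) * Complex.exp (((t₂ - t₁) * (2 * L + R / 2) : ℝ) : ℂ)‖ =
      2 * Real.exp (-logNorm R L t₁ t₂ k₁ k₂ ↑(1 / 2 : ℝ)) := by
  rw [logNorm_half, zpow_add_one₀ two_ne_zero, norm_mul, norm_mul, norm_zpow_eq_exp two_ne_zero,
    Complex.norm_exp, Complex.ofReal_re, Complex.norm_two, mul_comm _ (2 : ℝ), mul_assoc,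
    ← Real.exp_add]
  push_cast
  ring_nf

end Integrand

section EdgeScaling

/-- The scaling regime of the kernel at scale `M = T^{1/3}`: the times are `P M³ + O(M²)`, the
deviations of the exponents `k₁, k₂` from `v̄ t - s M` are `O(M²)` and opposite up to `O(1)`, and
`s₁, s₂` are bounded below, with all implied constants equal to `K`. -/
structure EdgeScaling (v P K M s₁ s₂ t₁ t₂ k₁ k₂ : ℝ) : Prop where
  time₁ : |t₁ - P * M ^ 3| ≤ K * M ^ 2
  time₂ : |t₂ - P * M ^ 3| ≤ K * M ^ 2
  deviation₂ : |k₂ - v * t₂ + s₂ * M| ≤ K * M ^ 2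
  deviation_add : |(k₁ - v * t₁ + s₁ * M) + (k₂ - v * t₂ + s₂ * M)| ≤ K
  neg_le₁ : -K ≤ s₁
  neg_le₂ : -K ≤ s₂

variable {R L P K M s₁ s₂ t₁ t₂ k₁ k₂ : ℝ}

lemma mul_sub_mul_le_of_abs_sub_le {τ ε a b A g : ℝ} (hτ : 0 ≤ τ) (ht₁ : |t₁ - τ| ≤ ε)
    (ht₂ : |t₂ - τ| ≤ ε) (ha : |a| ≤ A) (hb : |b| ≤ A) (hab : a - b ≤ g) :
    t₁ * a - t₂ * b ≤ τ * g + 2 * (ε * A) := by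
  have hε : 0 ≤ ε := (abs_nonneg _).trans ht₁
  have error₁ : (t₁ - τ) * a ≤ ε * A :=
    (le_abs_self _).trans ((abs_mul _ _).trans_le (by gcongr))
  have error₂ : -((t₂ - τ) * b) ≤ ε * A :=
    (neg_le_abs _).trans ((abs_mul _ _).trans_le (by gcongr))
  linarith [mul_le_mul_of_nonneg_left hab hτ]

lemma EdgeScaling.nonneg {v : ℝ} (hsc : EdgeScaling v P K M s₁ s₂ t₁ t₂ k₁ k₂) : 0 ≤ K :=
  (abs_nonneg _).trans hsc.deviation_add

lemma EdgeScaling.sub_speed_mul_le {v : ℝ} (hsc : EdgeScaling v P K M s₁ s₂ t₁ t₂ k₁ k₂)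
    (hM : 1 ≤ M) : k₂ - v * t₂ ≤ 2 * K * M ^ 2 := by
  have hK := hsc.nonneg
  have h₁ := (abs_le.1 hsc.deviation₂).2
  have h₂ : -s₂ * M ≤ K * M ^ 2 :=
    calc -s₂ * M ≤ K * M := by gcongr; linarith [hsc.neg_le₂]
      _ ≤ K * M ^ 2 := by gcongr; exact le_self_pow₀ hM two_ne_zero
  linarith

lemma logNorm_sub_logNorm_one_sub_le (hR : 0 ≤ R) (hL : 0 ≤ L) (hP : 0 ≤ P) (hM : 1 ≤ M)
    (hsc : EdgeScaling (meanSpeed R L) P K M s₁ s₂ t₁ t₂ k₁ k₂) {ρ : ℝ}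
    (hρ₀ : 1 / 4 ≤ ρ) (hρ₁ : ρ ≤ 1 / 2) {z : ℂ} (hz : ‖1 - z‖ = ρ) :
    logNorm R L t₁ t₂ k₁ k₂ z - logNorm R L t₁ t₂ k₁ k₂ ↑(1 - ρ) ≤
      -((3 * (8 * L + R) * P * ((1 / 2 - ρ) * M) - (40 * (R + L) + 8) * K) * M ^ 2 *
        (z.re - (1 - ρ))) := by
  have hK := hsc.nonneg
  have hρ_pos : 0 < ρ := by linarith
  have hρ_lt : ρ < 1 := by linarith
  have hδ := re_sub_one_sub_nonneg hz
  have times := mul_sub_mul_le_of_abs_sub_le (by positivity) hsc.time₁ hsc.time₂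
    (abs_phase_one_sub_sub_phase_le hR hL hz hρ₀)
    (abs_phase_sub_phase_one_sub_le hR hL hz hρ_pos.le hρ₁)
    (phase_sub_phase_le hR hL hz hρ_pos hρ₁)
  have exponents : (k₂ - meanSpeed R L * t₂) * (Real.log ‖z‖ - Real.log (1 - ρ)) ≤
      2 * K * M ^ 2 * (4 * (z.re - (1 - ρ))) := by
    have hlog : 0 ≤ Real.log ‖z‖ - Real.log (1 - ρ) :=
      le_trans (by positivity) (div_norm_sq_le_log_norm_sub_log_one_sub hz hρ_lt)
    gcongr
    · exact hsc.sub_speed_mul_le hM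
    · exact log_norm_sub_log_one_sub_le_four_mul hz hρ₁
  rw [logNorm_sub_logNorm_one_sub hz]
  linarith

lemma neg_mul_le_mul_sub {s y c : ℝ} (hK : 0 ≤ K) (hs : -K ≤ s) (hy : 1 ≤ y) (hc : y ≤ c) :
    -(s * y) ≤ K * c - s := by
  have h₁ := mul_nonneg (show 0 ≤ s + K by linarith) (sub_nonneg.2 hy)
  have h₂ := mul_le_mul_of_nonneg_left hc hK
  linarith

lemma EdgeScaling.exponents_mul_log_le {v : ℝ}
    (hsc : EdgeScaling v P K M s₁ s₂ t₁ t₂ k₁ k₂) (hM : 0 ≤ M) {h : ℝ}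
    (h₀ : 0 ≤ h) (h₁ : h ≤ 1 / 8) (hhM : 1 ≤ h * M) :
    (k₂ - v * t₂) * Real.log (1 + 2 * h) - (k₁ - v * t₁) * Real.log (1 - 2 * h) ≤
      16 * K * (h * M) ^ 2 + 7 * K * (h * M) - (s₁ + s₂) := by
  have hK := hsc.nonneg
  have taylor {x : ℝ} (hx : |x| = 2 * h) : |Real.log (1 + x) - x| ≤ 8 * h ^ 2 := by
    have := abs_log_one_add_sub_self_le (x := x) (by linarith)
    rw [← sq_abs, hx] at this
    linarith
  have h_sq : h ^ 2 ≤ h / 8 := by nlinarith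
  obtain ⟨plus_lower, plus_upper⟩ := abs_le.1 (taylor (abs_of_nonneg (by linarith)))
  obtain ⟨minus_lower, minus_upper⟩ :=
    abs_le.1 (taylor (x := -(2 * h)) (by rw [abs_neg, abs_of_nonneg (by linarith)]))
  rw [← sub_eq_add_neg] at minus_lower minus_upper
  set lp := Real.log (1 + 2 * h)
  set lm := Real.log (1 - 2 * h)
  have s₂_term : -(s₂ * (M * lp)) ≤ K * (3 * (h * M)) - s₂ :=
    neg_mul_le_mul_sub hK hsc.neg_le₂ (by nlinarith) (by nlinarith)
  have s₁_term : -(s₁ * (M * -lm)) ≤ K * (3 * (h * M)) - s₁ :=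
    neg_mul_le_mul_sub hK hsc.neg_le₁ (by nlinarith) (by nlinarith)
  have common : (k₂ - v * t₂ + s₂ * M) * (lp + lm) ≤ K * M ^ 2 * (16 * h ^ 2) := by
    refine (le_abs_self _).trans ((abs_mul _ _).trans_le ?_)
    gcongr
    · exact hsc.deviation₂
    · exact abs_le.2 ⟨by linarith, by linarith⟩
  have discrepancy : -(((k₁ - v * t₁ + s₁ * M) + (k₂ - v * t₂ + s₂ * M)) * lm) ≤ K * 1 := by
    refine (neg_le_abs _).trans ((abs_mul _ _).trans_le ?_)
    gcongr
    · exact hsc.deviation_add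
    · exact abs_le.2 ⟨by linarith, by linarith⟩
  linarith [mul_le_mul_of_nonneg_left hhM hK]

lemma logNorm_half_add_sub_logNorm_half_le (hR : 0 ≤ R) (hL : 0 ≤ L) (hP : 0 ≤ P) (hM : 0 ≤ M)
    (hsc : EdgeScaling (meanSpeed R L) P K M s₁ s₂ t₁ t₂ k₁ k₂) {h : ℝ}
    (h₀ : 0 ≤ h) (h₁ : h ≤ 1 / 8) (hhM : 1 ≤ h * M) :
    logNorm R L t₁ t₂ k₁ k₂ ↑(1 / 2 + h) - logNorm R L t₁ t₂ k₁ k₂ ↑(1 / 2 : ℝ) ≤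
      48 * (R + L) * P * (h * M) ^ 3 + (64 * (R + L) + 16) * K * (h * M) ^ 2 +
        7 * K * (h * M) - (s₁ + s₂) := by
  have hh : |h| ≤ 1 / 4 := by rw [abs_of_nonneg h₀]; linarith
  have times := mul_sub_mul_le_of_abs_sub_le (by positivity) hsc.time₁ hsc.time₂
    (abs_phase_half_sub_sub_le hR hL hh) (abs_phase_half_add_sub_le hR hL hh)
    (g := 48 * (R + L) * h ^ 3)
    (by linarith [phase_half_sub_sub_phase_half_add_le hR hL h₀ (by linarith)])
  have exponents := hsc.exponents_mul_log_le hM h₀ h₁ hhM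
  rw [logNorm_half_add_sub_logNorm_half hh]
  linarith

end EdgeScaling

section MainTerm

/-- The conjugated main term of the flat PushASEP kernel, rescaled by `M = T^{1/3}`. -/
noncomputable def mainTerm (R L M t₁ t₂ : ℝ) (k₁ k₂ : ℤ) (r : ℝ) : ℂ :=
  (2 : ℂ) ^ (k₂ - k₁ + 1) * Complex.exp (((t₂ - t₁) * (2 * L + R / 2) : ℝ) : ℂ) * (M : ℂ) *
    (2 * (π : ℂ) * I)⁻¹ * ∮ z in C(1, r), integrand R L t₁ t₂ k₁ k₂ z

variable {R L P K M s₁ s₂ t₁ t₂ : ℝ} {k₁ k₂ : ℤ}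

lemma mainTerm_eq_mainTerm {r₁ r₂ : ℝ} (h₁ : r₁ ∈ Set.Ioo 0 1) (h₂ : r₂ ∈ Set.Ioo 0 1) :
    mainTerm R L M t₁ t₂ k₁ k₂ r₁ = mainTerm R L M t₁ t₂ k₁ k₂ r₂ := by
  rw [mainTerm, mainTerm,
    circleIntegral_eq_of_differentiableOn_ball_diff_center differentiableOn_integrand h₁ h₂]

lemma norm_circleIntegral_integrand_le (hR : 0 ≤ R) (hL : 0 ≤ L) (hP : 0 ≤ P) (hM : 1 ≤ M)
    (hsc : EdgeScaling (meanSpeed R L) P K M s₁ s₂ t₁ t₂ k₁ k₂) {ρ : ℝ}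
    (hρ₀ : 1 / 4 ≤ ρ) (hρ₁ : ρ ≤ 1 / 2)
    (hdecay : 1 ≤ 3 * (8 * L + R) * P * ((1 / 2 - ρ) * M) - (40 * (R + L) + 8) * K) :
    ‖∮ z in C(1, ρ), integrand R L t₁ t₂ k₁ k₂ z‖ ≤
      Real.exp (logNorm R L t₁ t₂ k₁ k₂ ↑(1 - ρ)) * (√(2 * π ^ 3) / M) := by
  have hρ : 0 < ρ := by linarith
  have hM_pos : 0 < M := by linarith
  have norm_le : ∀ z ∈ Metric.sphere (1 : ℂ) ρ, ‖integrand R L t₁ t₂ k₁ k₂ z‖ ≤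
      Real.exp (logNorm R L t₁ t₂ k₁ k₂ ↑(1 - ρ)) *
        Real.exp (-(M ^ 2 * (z.re - ((1 : ℂ).re - ρ)))) := by
    intro z hz_mem
    have hz : ‖1 - z‖ = ρ := by rwa [norm_sub_rev, ← mem_sphere_iff_norm]
    have hz₁ : 1 - z ≠ 0 := norm_pos_iff.1 (hz ▸ hρ)
    have hz₀ : z ≠ 0 := by
      rintro rfl
      rw [sub_zero, norm_one] at hz
      linarith
    have hδ := re_sub_one_sub_nonneg hz
    rw [norm_integrand hz₀ hz₁, ← Real.exp_add, Real.exp_le_exp, Complex.one_re]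
    have h := logNorm_sub_logNorm_one_sub_le hR hL hP hM hsc hρ₀ hρ₁ hz
    have decay := mul_le_mul_of_nonneg_right hdecay
      (show 0 ≤ M ^ 2 * (z.re - (1 - ρ)) by positivity)
    linarith
  calc ‖∮ z in C(1, ρ), integrand R L t₁ t₂ k₁ k₂ z‖
      ≤ ρ * Real.exp (logNorm R L t₁ t₂ k₁ k₂ ↑(1 - ρ)) * √(π ^ 3 / (2 * (M ^ 2 * ρ))) :=
        norm_circleIntegral_le_of_norm_le_exp hρ (by positivity) norm_le
    _ ≤ 1 * Real.exp (logNorm R L t₁ t₂ k₁ k₂ ↑(1 - ρ)) * √(2 * π ^ 3 / M ^ 2) := by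
        gcongr ?_ * _ * √?_
        · linarith
        · rw [div_le_div_iff₀ (by positivity) (by positivity)]
          have : 0 ≤ π ^ 3 * M ^ 2 := by positivity
          nlinarith
    _ = Real.exp (logNorm R L t₁ t₂ k₁ k₂ ↑(1 - ρ)) * (√(2 * π ^ 3) / M) := by
        rw [one_mul, Real.sqrt_div (by positivity), Real.sqrt_sq hM_pos.le]

lemma norm_mainTerm_le (hR : 0 ≤ R) (hL : 0 ≤ L) (hP : 0 ≤ P) (hM : 1 ≤ M)
    (hsc : EdgeScaling (meanSpeed R L) P K M s₁ s₂ t₁ t₂ k₁ k₂) {h : ℝ}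
    (h₀ : 0 ≤ h) (h₁ : h ≤ 1 / 8) (hhM : 1 ≤ h * M)
    (hdecay : 1 ≤ 3 * (8 * L + R) * P * (h * M) - (40 * (R + L) + 8) * K) :
    ‖mainTerm R L M t₁ t₂ k₁ k₂ (1 / 2 - h)‖ ≤
      2 * √(2 * π ^ 3) * Real.exp (48 * (R + L) * P * (h * M) ^ 3 +
        (64 * (R + L) + 16) * K * (h * M) ^ 2 + 7 * K * (h * M)) * Real.exp (-(s₁ + s₂)) := by
  have hM_pos : 0 < M := by linarith
  have integral_le := norm_circleIntegral_integrand_le hR hL hP hM hsc (ρ := 1 / 2 - h)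
    (by linarith) (by linarith) (by rwa [sub_sub_cancel])
  have value_le := logNorm_half_add_sub_logNorm_half_le hR hL hP hM_pos.le hsc h₀ h₁ hhM
  rw [show 1 - (1 / 2 - h) = 1 / 2 + h by ring] at integral_le
  have norm_two_pi_I_inv : ‖(2 * (π : ℂ) * I)⁻¹‖ ≤ 1 := by
    rw [norm_inv, norm_mul, norm_mul, Complex.norm_two, Complex.norm_real, Complex.norm_I,
      Real.norm_eq_abs, abs_of_pos Real.pi_pos]
    exact inv_le_one_of_one_le₀ (by linarith [Real.pi_gt_three])
  calc ‖mainTerm R L M t₁ t₂ k₁ k₂ (1 / 2 - h)‖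
      = 2 * Real.exp (-logNorm R L t₁ t₂ k₁ k₂ ↑(1 / 2 : ℝ)) * M * ‖(2 * (π : ℂ) * I)⁻¹‖ *
          ‖∮ z in C(1, 1 / 2 - h), integrand R L t₁ t₂ k₁ k₂ z‖ := by
        rw [mainTerm, norm_mul, norm_mul, norm_mul, norm_conjugation, Complex.norm_real,
          Real.norm_eq_abs, abs_of_pos hM_pos]
    _ ≤ 2 * Real.exp (-logNorm R L t₁ t₂ k₁ k₂ ↑(1 / 2 : ℝ)) * M * 1 *
          (Real.exp (logNorm R L t₁ t₂ k₁ k₂ ↑(1 / 2 + h)) * (√(2 * π ^ 3) / M)) := by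
        gcongr
    _ = 2 * √(2 * π ^ 3) * Real.exp (logNorm R L t₁ t₂ k₁ k₂ ↑(1 / 2 + h) -
          logNorm R L t₁ t₂ k₁ k₂ ↑(1 / 2 : ℝ)) := by
        rw [sub_eq_add_neg, Real.exp_add]
        field_simp
    _ ≤ _ := by
        rw [mul_assoc _ (Real.exp _), ← Real.exp_add, ← sub_eq_add_neg]
        gcongr

lemma exists_norm_mainTerm_le (hR : 0 ≤ R) (hL : 0 ≤ L) (hRL : 0 < 8 * L + R) (hP : 0 < P) :
    ∃ C > 0, ∃ M₀ ≥ 1, ∀ M ≥ M₀, ∀ (s₁ s₂ t₁ t₂ : ℝ) (k₁ k₂ : ℤ),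
      EdgeScaling (meanSpeed R L) P K M s₁ s₂ t₁ t₂ k₁ k₂ → ∀ r ∈ Set.Ioo (0 : ℝ) 1,
        ‖mainTerm R L M t₁ t₂ k₁ k₂ r‖ ≤ C * Real.exp (-(s₁ + s₂)) := by
  have hgain : 0 < 3 * (8 * L + R) * P := by positivity
  -- At distance `b / M` from `1/2` the gain of order `b M²` beats the `O(M²)` errors for large `b`.
  obtain ⟨b, hb₁, hb⟩ : ∃ b ≥ 1, (1 + (40 * (R + L) + 8) * K) / (3 * (8 * L + R) * P) ≤ b :=
    ⟨max 1 _, le_max_left _ _, le_max_right _ _⟩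
  rw [div_le_iff₀ hgain] at hb
  refine ⟨2 * √(2 * π ^ 3) * Real.exp (48 * (R + L) * P * b ^ 3 +
      (64 * (R + L) + 16) * K * b ^ 2 + 7 * K * b), by positivity, 8 * b, by linarith, ?_⟩
  intro M hM s₁ s₂ t₁ t₂ k₁ k₂ hsc r hr
  have hM_pos : 0 < M := by linarith
  have hhM : b / M * M = b := div_mul_cancel₀ b hM_pos.ne'
  have h₀ : 0 < b / M := by positivity
  have h₁ : b / M ≤ 1 / 8 := by
    rw [div_le_iff₀ hM_pos]
    linarith
  have bound := norm_mainTerm_le hR hL hP.le (by linarith) hsc h₀.le h₁ (by rwa [hhM])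
    (by rw [hhM]; linarith)
  rwa [hhM, mainTerm_eq_mainTerm ⟨by linarith, by linarith⟩ hr] at bound

end MainTerm

section Scaling

variable (R L θ p₀ p₁ p₂ : ℝ)

lemma rpow_one_third_pow_three {T : ℝ} (hT : 0 ≤ T) : (T ^ ((1 : ℝ) / 3)) ^ 3 = T := by
  rw [← Real.rpow_natCast, ← Real.rpow_mul hT]
  norm_num

lemma rpow_one_third_sq {T : ℝ} (hT : 0 ≤ T) : (T ^ ((1 : ℝ) / 3)) ^ 2 = T ^ ((2 : ℝ) / 3) := by
  rw [← Real.rpow_natCast, ← Real.rpow_mul hT]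
  norm_num

lemma abs_mul_sq_add_mul_le (a b : ℝ) {M : ℝ} (hM : 1 ≤ M) :
    |a * M ^ 2 + b * M| ≤ (|a| + |b|) * M ^ 2 := by
  calc |a * M ^ 2 + b * M| ≤ |a| * M ^ 2 + |b| * M := by
        refine (abs_add_le _ _).trans_eq ?_
        rw [abs_mul, abs_mul, abs_of_nonneg (sq_nonneg M), abs_of_nonneg (by linarith : 0 ≤ M)]
    _ ≤ |a| * M ^ 2 + |b| * M ^ 2 := by
        gcongr
        exact le_self_pow₀ hM two_ne_zero
    _ = (|a| + |b|) * M ^ 2 := by ring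

lemma exists_abs_tscale_sub_le (u : ℝ) : ∃ K ≥ 0, ∀ T ≥ 1,
    |tscale θ p₀ p₁ p₂ T u - (p₀ + θ) * (T ^ ((1 : ℝ) / 3)) ^ 3| ≤
      K * (T ^ ((1 : ℝ) / 3)) ^ 2 := by
  refine ⟨|-((p₁ + 1) * u)| + |1 / 2 * p₂ * u ^ 2|, by positivity, fun T hT ↦ ?_⟩
  have hT₀ : 0 ≤ T := by linarith
  refine le_of_eq_of_le (congrArg abs ?_) <|
    abs_mul_sq_add_mul_le _ _ (Real.one_le_rpow hT (by norm_num : (0 : ℝ) ≤ 1 / 3))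
  rw [tscale, ← rpow_one_third_sq hT₀, rpow_one_third_pow_three hT₀]
  ring

lemma exists_abs_nscale_sub_le (u : ℝ) : ∃ K ≥ 0, ∀ T ≥ 1,
    |nscale θ p₀ p₁ p₂ T u - (p₀ - θ) * (T ^ ((1 : ℝ) / 3)) ^ 3| ≤
      K * (T ^ ((1 : ℝ) / 3)) ^ 2 := by
  refine ⟨|(1 - p₁) * u| + |1 / 2 * p₂ * u ^ 2| + 1, by positivity, fun T hT ↦ ?_⟩
  have hT₀ : 0 ≤ T := by linarith
  have hM : 1 ≤ T ^ ((1 : ℝ) / 3) := Real.one_le_rpow hT (by norm_num)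
  have terms := abs_le.1 (abs_mul_sq_add_mul_le ((1 - p₁) * u) (1 / 2 * p₂ * u ^ 2) hM)
  have floor_le := Int.floor_le ((p₀ - θ) * T + (1 - p₁) * u * T ^ ((2 : ℝ) / 3) +
    1 / 2 * p₂ * u ^ 2 * T ^ ((1 : ℝ) / 3))
  have lt_floor := Int.sub_one_lt_floor ((p₀ - θ) * T + (1 - p₁) * u * T ^ ((2 : ℝ) / 3) +
    1 / 2 * p₂ * u ^ 2 * T ^ ((1 : ℝ) / 3))
  rw [← nscale] at floor_le lt_floor
  rw [← rpow_one_third_sq hT₀] at floor_le lt_floor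
  rw [rpow_one_third_pow_three hT₀, abs_le]
  have one_le_sq : 1 ≤ (T ^ ((1 : ℝ) / 3)) ^ 2 := one_le_pow₀ hM
  constructor <;> linarith [terms.1, terms.2]

lemma abs_xscale_sub_le (T u s : ℝ) :
    |(xscale R L θ p₀ p₁ p₂ T u s : ℝ) - (-2 * nscale θ p₀ p₁ p₂ T u +
      meanSpeed R L * tscale θ p₀ p₁ p₂ T u - s * T ^ ((1 : ℝ) / 3))| ≤ 1 := by
  rw [xscale, meanSpeed, abs_sub_comm, Int.self_sub_floor, Int.abs_fract]
  exact (Int.fract_lt_one _).le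

lemma exists_edgeScaling (u₁ u₂ ℓ : ℝ) : ∃ K, ∀ T ≥ 1, ∀ s₁ s₂, -ℓ ≤ s₁ → -ℓ ≤ s₂ →
    EdgeScaling (meanSpeed R L) (p₀ + θ) K (T ^ ((1 : ℝ) / 3)) s₁ s₂
      (tscale θ p₀ p₁ p₂ T u₁) (tscale θ p₀ p₁ p₂ T u₂)
      ↑(nscale θ p₀ p₁ p₂ T u₁ + nscale θ p₀ p₁ p₂ T u₂ + xscale R L θ p₀ p₁ p₂ T u₁ s₁ + 1)
      ↑(nscale θ p₀ p₁ p₂ T u₁ + nscale θ p₀ p₁ p₂ T u₂ + xscale R L θ p₀ p₁ p₂ T u₂ s₂) := by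
  obtain ⟨A₁, hA₁, time₁⟩ := exists_abs_tscale_sub_le θ p₀ p₁ p₂ u₁
  obtain ⟨A₂, hA₂, time₂⟩ := exists_abs_tscale_sub_le θ p₀ p₁ p₂ u₂
  obtain ⟨B₁, hB₁, count₁⟩ := exists_abs_nscale_sub_le θ p₀ p₁ p₂ u₁
  obtain ⟨B₂, hB₂, count₂⟩ := exists_abs_nscale_sub_le θ p₀ p₁ p₂ u₂
  refine ⟨A₁ + A₂ + (B₁ + B₂ + 3) + |ℓ|, fun T hT s₁ s₂ hs₁ hs₂ ↦ ?_⟩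
  have one_le_sq : 1 ≤ (T ^ ((1 : ℝ) / 3)) ^ 2 :=
    one_le_pow₀ (Real.one_le_rpow hT (by norm_num))
  obtain ⟨n₁_lower, n₁_upper⟩ := abs_le.1 (count₁ T hT)
  obtain ⟨n₂_lower, n₂_upper⟩ := abs_le.1 (count₂ T hT)
  obtain ⟨x₁_lower, x₁_upper⟩ := abs_le.1 (abs_xscale_sub_le R L θ p₀ p₁ p₂ T u₁ s₁)
  obtain ⟨x₂_lower, x₂_upper⟩ := abs_le.1 (abs_xscale_sub_le R L θ p₀ p₁ p₂ T u₂ s₂)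
  have hℓ := le_abs_self ℓ
  have hℓ₀ := abs_nonneg ℓ
  push_cast
  constructor
  · refine (time₁ T hT).trans ?_
    gcongr
    linarith
  · refine (time₂ T hT).trans ?_
    gcongr
    linarith
  · refine le_trans ?_ (mul_le_mul_of_nonneg_right
      (show B₁ + B₂ + 3 ≤ A₁ + A₂ + (B₁ + B₂ + 3) + |ℓ| by linarith) (by linarith))
    exact abs_le.2 ⟨by linarith, by linarith⟩
  · exact abs_le.2 ⟨by linarith, by linarith⟩
  · linarith
  · linarith

end Scaling

end PushASEP

theorem stmt18_general (R L θ p₀ p₁ p₂ : ℝ) (hR : 0 ≤ R) (hL : 0 ≤ L) (hRL : 0 < 8 * L + R)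
    (hpθ : 0 < p₀ + θ) (u₁ u₂ ℓ : ℝ) :
    ∃ C > (0 : ℝ), ∃ T₀ > (0 : ℝ), ∀ T ≥ T₀, ∀ s₁ s₂ : ℝ, -ℓ ≤ s₁ → -ℓ ≤ s₂ →
      ∀ r : ℝ, 0 < r → r < 1 →
      ‖(2 : ℂ) ^ (xscale R L θ p₀ p₁ p₂ T u₂ s₂ - xscale R L θ p₀ p₁ p₂ T u₁ s₁) *
          Complex.exp ((((tscale θ p₀ p₁ p₂ T u₂ - tscale θ p₀ p₁ p₂ T u₁)
              * (2*L + R/2) : ℝ) : ℂ)) *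
          ((T ^ ((1 : ℝ)/3) : ℝ) : ℂ) * (2 * (Real.pi : ℂ) * Complex.I)⁻¹ *
          ∮ z in C(1, r),
            Complex.exp ((R * tscale θ p₀ p₁ p₂ T u₁ : ℝ) * (1 - z)
                + (L * tscale θ p₀ p₁ p₂ T u₁ : ℝ) / (1 - z)
                - (R * tscale θ p₀ p₁ p₂ T u₂ : ℝ) * z
                - (L * tscale θ p₀ p₁ p₂ T u₂ : ℝ) / z) *
              z ^ (nscale θ p₀ p₁ p₂ T u₁ + nscale θ p₀ p₁ p₂ T u₂
                  + xscale R L θ p₀ p₁ p₂ T u₂ s₂) *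
              (1 - z) ^ (-(nscale θ p₀ p₁ p₂ T u₁ + nscale θ p₀ p₁ p₂ T u₂
                  + xscale R L θ p₀ p₁ p₂ T u₁ s₁ + 1))‖
        ≤ C * Real.exp (-(s₁ + s₂)) := by
  obtain ⟨K, scaling⟩ := PushASEP.exists_edgeScaling R L θ p₀ p₁ p₂ u₁ u₂ ℓ
  obtain ⟨C, hC, M₀, hM₀, bound⟩ := PushASEP.exists_norm_mainTerm_le hR hL hRL hpθ
  refine ⟨C, hC, M₀ ^ 3, by positivity, fun T hT s₁ s₂ hs₁ hs₂ r hr₀ hr₁ ↦ ?_⟩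
  have hT₁ : 1 ≤ T := (one_le_pow₀ hM₀).trans hT
  have hM : M₀ ≤ T ^ ((1 : ℝ) / 3) := by
    rw [← pow_le_pow_iff_left₀ (by linarith) (by positivity) three_ne_zero,
      PushASEP.rpow_one_third_pow_three (by linarith)]
    exact hT
  have exponent_sub : xscale R L θ p₀ p₁ p₂ T u₂ s₂ - xscale R L θ p₀ p₁ p₂ T u₁ s₁ =
      (nscale θ p₀ p₁ p₂ T u₁ + nscale θ p₀ p₁ p₂ T u₂ + xscale R L θ p₀ p₁ p₂ T u₂ s₂) -
        (nscale θ p₀ p₁ p₂ T u₁ + nscale θ p₀ p₁ p₂ T u₂ + xscale R L θ p₀ p₁ p₂ T u₁ s₁ + 1) +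
        1 := by ring
  rw [exponent_sub]
  exact bound _ hM _ _ _ _ _ _ (scaling T hT₁ s₁ s₂ hs₁ hs₂) r ⟨hr₀, hr₁⟩

/-- bound on the conjugated, rescaled main term of the
flat-initial-condition PushASEP kernel: for fixed `u₁, u₂` and `ℓ > 0` there are
`C, T₀ > 0` such that for all `T ≥ T₀` and all `s₁, s₂ ≥ −ℓ` the term is bounded by
`C e^{−(s₁+s₂)}`. -/
theorem stmt18 (R L θ p₀ p₁ p₂ : ℝ) (hR : 0 ≤ R) (hL : 0 ≤ L)
    (hRL : 0 < 8*L + R) (hθ : 0 < θ) (hp₀ : θ ≤ p₀) (hp₁ : |p₁| ≤ 1)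
    (hκ : 0 < (R + 4*L) * (p₁ + 1) + 4 * (1 - p₁))
    (u₁ u₂ : ℝ) (ℓ : ℝ) (hℓ : 0 < ℓ) :
    ∃ C > (0 : ℝ), ∃ T₀ > (0 : ℝ), ∀ T ≥ T₀, ∀ s₁ s₂ : ℝ, -ℓ ≤ s₁ → -ℓ ≤ s₂ →
      ∀ r : ℝ, 0 < r → r < 1 →
      ‖(2 : ℂ) ^ (xscale R L θ p₀ p₁ p₂ T u₂ s₂ - xscale R L θ p₀ p₁ p₂ T u₁ s₁) *
          Complex.exp ((((tscale θ p₀ p₁ p₂ T u₂ - tscale θ p₀ p₁ p₂ T u₁)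
              * (2*L + R/2) : ℝ) : ℂ)) *
          ((T ^ ((1 : ℝ)/3) : ℝ) : ℂ) * (2 * (Real.pi : ℂ) * Complex.I)⁻¹ *
          ∮ z in C(1, r),
            Complex.exp ((R * tscale θ p₀ p₁ p₂ T u₁ : ℝ) * (1 - z)
                + (L * tscale θ p₀ p₁ p₂ T u₁ : ℝ) / (1 - z)
                - (R * tscale θ p₀ p₁ p₂ T u₂ : ℝ) * z
                - (L * tscale θ p₀ p₁ p₂ T u₂ : ℝ) / z) *
              z ^ (nscale θ p₀ p₁ p₂ T u₁ + nscale θ p₀ p₁ p₂ T u₂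
                  + xscale R L θ p₀ p₁ p₂ T u₂ s₂) *
              (1 - z) ^ (-(nscale θ p₀ p₁ p₂ T u₁ + nscale θ p₀ p₁ p₂ T u₂
                  + xscale R L θ p₀ p₁ p₂ T u₁ s₁ + 1))‖
        ≤ C * Real.exp (-(s₁ + s₂)) :=
  stmt18_general R L θ p₀ p₁ p₂ hR hL hRL (by linarith) u₁ u₂ ℓ
end
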